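/- arXiv:1510.00761 — 3 statements merged into one kernel-verified Lean document; each statement's English description precedes it below -/
import Mathlib

section
/- Fix n ≥ 1, a compact set D ⊆ [0,1]^n, a twice continuously differentiable vector field f : ℝ^n → ℝ^n, a flow φ : [0,∞) × D → D with ∂φ/∂t(t,x) = f(φ(t,x)) and φ(0,x) = x, and a unique equilibrium point x* ∈ D (f(x*) = 0). Suppose the flow is globally asymptotically stable and locally exponentially stable. Suppose that for each integer M ≥ 1 we are given a finite set S_M ⊆ D, normalized transition rates q_M : S_M × S_M → ℝ≥0 with q_M(x,x) = 0, and a stationary distribution π_M of the continuous-time Markov chain with rates Q_M(x,y) = M·q_M(x,y), and that there exist constants c > 0 and c̃ > 0, independent of M, such that: (i) bounded transition rate: Σ_{x∈S_M} π_M(x) Σ_{y≠x} q_M(x,y) ≤ c for all M; (ii) bounded state transitions: q_M(x,y) > 0 implies ‖y − x‖ ≤ c̃/M; (iii) perfect mean-field model: f(x) = M·Σ_{y≠x} q_M(x,y)(y − x) for every x ∈ S_M and every M. Then there exist a constant C > 0 and an integer M₀ such that for all M ≥ M₀, Σ_{x∈S_M} π_M(x)·‖x − x*‖² ≤ C/M;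 that is, the stationary distributions converge to x* in the mean-square sense with rate 1/M. -/
open Filter MeasureTheory


theorem mf_trunc {E : Type*} [NormedAddCommGroup E] [NormedSpace ℝ E] {R : ℝ} (hR : 0 < R)
    (x y : E) : ‖(R / max R ‖x‖) • x - (R / max R ‖y‖) • y‖ ≤ 2 * ‖x - y‖ := by
  have hx : 0 < max R ‖x‖ := lt_max_of_lt_left hR
  have hy : 0 < max R ‖y‖ := lt_max_of_lt_left hR
  have e : (R / max R ‖x‖) • x - (R / max R ‖y‖) • y
      = (R / max R ‖x‖) • (x - y) + (R / max R ‖x‖ - R / max R ‖y‖) • y := by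
    module
  rw [e]
  have h1 : ‖(R / max R ‖x‖) • (x - y)‖ ≤ ‖x - y‖ := by
    rw [norm_smul, Real.norm_of_nonneg (by positivity)]
    have : R / max R ‖x‖ ≤ 1 := by
      rw [div_le_one hx]; exact le_max_left _ _
    exact mul_le_of_le_one_left (norm_nonneg _) this
  have h2 : ‖(R / max R ‖x‖ - R / max R ‖y‖) • y‖ ≤ ‖x - y‖ := by
    rw [norm_smul, Real.norm_eq_abs]
    have e2 : R / max R ‖x‖ - R / max R ‖y‖
        = (R / max R ‖x‖) * (max R ‖y‖ - max R ‖x‖) / max R ‖y‖ := by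
      field_simp
    have h3 : |max R ‖y‖ - max R ‖x‖| ≤ ‖x - y‖ := by
      have := abs_max_sub_max_le_abs ‖y‖ ‖x‖ R
      rw [max_comm R, max_comm R]
      refine this.trans ?_
      rw [norm_sub_rev]
      exact abs_norm_sub_norm_le y x
    have h4 : R / max R ‖x‖ ≤ 1 := by
      rw [div_le_one hx]; exact le_max_left _ _
    rw [e2, abs_div, abs_mul, abs_of_pos hy, abs_of_nonneg (by positivity : 0 ≤ R / max R ‖x‖),
      div_mul_eq_mul_div, div_le_iff₀ hy]
    calc R / max R ‖x‖ * |max R ‖y‖ - max R ‖x‖| * ‖y‖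
        ≤ 1 * ‖x - y‖ * max R ‖y‖ := by
          gcongr
          exact le_max_right _ _
      _ = ‖x - y‖ * max R ‖y‖ := by ring
  calc _ ≤ _ := norm_add_le _ _
    _ ≤ 2 * ‖x - y‖ := by linarith

/-- Global solvability of linear ODEs on `[0,T]` with zero initial value. -/
theorem mf_linear {E : Type*} [NormedAddCommGroup E] [NormedSpace ℝ E] [CompleteSpace E]
    {T l β : ℝ} (hT : 0 ≤ T) (hl : 0 ≤ l) (hβ : 0 ≤ β)
    (A : ℝ → E →L[ℝ] E) (b : ℝ → E) (hA : ContinuousOn A (Set.Icc 0 T))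
    (hb : ContinuousOn b (Set.Icc 0 T))
    (hAl : ∀ t ∈ Set.Icc 0 T, ‖A t‖ ≤ l) (hbβ : ∀ t ∈ Set.Icc 0 T, ‖b t‖ ≤ β) :
    ∃ p : ℝ → E, p 0 = 0 ∧ ∀ t ∈ Set.Icc 0 T,
      HasDerivWithinAt p (A t (p t) + b t) (Set.Icc 0 T) t ∧ ‖p t‖ ≤ gronwallBound 0 l β T := by
  set R : ℝ := gronwallBound 0 l β T + 1 with hRdef
  have hmono := gronwallBound_mono (δ := 0) le_rfl hβ hl
  have hg0 : 0 ≤ gronwallBound 0 l β T := by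
    have := hmono hT
    rwa [gronwallBound_x0] at this
  have hR : 0 < R := by linarith
  let v : ℝ → E → E := fun t x => A t ((R / max R ‖x‖) • x) + b t
  have hle1 : ∀ x : E, ‖(R / max R ‖x‖) • x‖ ≤ ‖x‖ := by
    intro x
    rw [norm_smul, Real.norm_of_nonneg (by positivity)]
    have : R / max R ‖x‖ ≤ 1 := by
      rw [div_le_one (lt_max_of_lt_left hR)]; exact le_max_left _ _
    exact mul_le_of_le_one_left (norm_nonneg _) this
  have hleR : ∀ x : E, ‖(R / max R ‖x‖) • x‖ ≤ R := by
    intro x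
    rw [norm_smul, Real.norm_of_nonneg (by positivity), div_mul_eq_mul_div,
      div_le_iff₀ (lt_max_of_lt_left hR)]
    gcongr
    exact le_max_right _ _
  have hPL : IsPicardLindelof v (tmin := 0) (tmax := T) ⟨0, le_rfl, hT⟩ (0 : E)
      (Real.toNNReal ((l * R + β) * T)) 0 (Real.toNNReal (l * R + β)) (Real.toNNReal (l * 2)) := by
    refine ⟨?_, ?_, ?_, ?_⟩
    · intro t ht
      refine LipschitzOnWith.of_dist_le_mul ?_
      intro x _ y _
      rw [Real.coe_toNNReal _ (by positivity), dist_eq_norm, dist_eq_norm]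
      simp only [v, add_sub_add_right_eq_sub, ← map_sub]
      calc _ ≤ ‖A t‖ * _ := (A t).le_opNorm _
        _ ≤ l * (2 * ‖x - y‖) := by
          gcongr
          · exact hAl t ht
          · exact mf_trunc hR x y
        _ = _ := by ring
    · intro x _
      exact (hA.clm_apply continuousOn_const).add hb
    · intro t ht x _
      rw [Real.coe_toNNReal _ (by positivity)]
      refine (norm_add_le _ _).trans ?_
      gcongr
      · calc _ ≤ ‖A t‖ * _ := (A t).le_opNorm _
          _ ≤ l * R := by
            gcongr
            · exact hAl t ht
            · exact hleR x
      · exact hbβ t ht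
    · rw [Real.coe_toNNReal _ (by positivity), Real.coe_toNNReal _ (by positivity)]
      simp [hT]
  obtain ⟨p, hp0, hp⟩ := hPL.exists_eq_forall_mem_Icc_hasDerivWithinAt₀
  have hbound : ∀ t ∈ Set.Icc 0 T, ‖p t‖ ≤ gronwallBound 0 l β T := by
    intro t ht
    have := norm_le_gronwallBound_of_norm_deriv_right_le (f := p) (f' := fun t => v t (p t))
      (δ := 0) (K := l) (ε := β) (a := 0) (b := T)
      (fun t ht => (hp t ht).continuousWithinAt)
      (fun t ht => ((hp t ⟨ht.1, ht.2.le⟩).mono_of_mem_nhdsWithin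
        (Icc_mem_nhdsGE_of_mem ht)))
      (by simp at hp0; simp [hp0])
      (by
        intro t ht
        have ht' : t ∈ Set.Icc 0 T := ⟨ht.1, ht.2.le⟩
        refine (norm_add_le _ _).trans ?_
        gcongr
        · calc _ ≤ ‖A t‖ * _ := (A t).le_opNorm _
            _ ≤ l * ‖p t‖ := by
              gcongr
              · exact hAl t ht'
              · exact hle1 _
        · exact hbβ t ht') t ht
    refine this.trans (hmono ?_)
    linarith [ht.2]
  refine ⟨p, by simpa using hp0, fun t ht => ⟨?_, hbound t ht⟩⟩
  have h := hp t ht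
  have : max R ‖p t‖ = R := max_eq_left (by linarith [hbound t ht])
  simpa [v, this, div_self hR.ne'] using h

theorem mf_taylor {E : Type*} [NormedAddCommGroup E] [NormedSpace ℝ E] [ProperSpace E]
    (f : E → E) (hf : ContDiff ℝ 2 f) (x0 : E) (R : ℝ) :
    ∃ l K : ℝ, 0 ≤ l ∧ 0 ≤ K ∧ (∀ z ∈ Metric.closedBall x0 R, ‖fderiv ℝ f z‖ ≤ l) ∧
      LipschitzOnWith l.toNNReal f (Metric.closedBall x0 R) ∧
      ∀ x ∈ Metric.closedBall x0 R, ∀ y ∈ Metric.closedBall x0 R,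
        ‖f y - f x - fderiv ℝ f x (y - x)‖ ≤ K * ‖y - x‖ ^ 2 := by
  have hdf : ContDiff ℝ 1 (fderiv ℝ f) := hf.fderiv_right (by norm_num)
  have hcomp : IsCompact (Metric.closedBall x0 R) := isCompact_closedBall x0 R
  have hdiff : Differentiable ℝ f := hf.differentiable (by norm_num)
  obtain ⟨l₀, hl₀⟩ := hcomp.exists_bound_of_continuousOn hdf.continuous.continuousOn
  obtain ⟨K, hK⟩ := (hdf.locallyLipschitz.locallyLipschitzOn
    (s := Metric.closedBall x0 R)).exists_lipschitzOnWith_of_compact hcomp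
  refine ⟨max l₀ 0, K, le_max_right _ _, K.2, fun z hz => (hl₀ z hz).trans (le_max_left _ _),
    ?_, ?_⟩
  · refine (convex_closedBall x0 R).lipschitzOnWith_of_nnnorm_fderiv_le (𝕜 := ℝ)
      (fun x _ => hdiff x) ?_
    intro x hx
    rw [← NNReal.coe_le_coe, Real.coe_toNNReal _ (le_max_right _ _)]
    exact (hl₀ x hx).trans (le_max_left _ _)
  · intro x hx y hy
    have := (((convex_closedBall x0 R).inter (convex_closedBall x ‖y - x‖))).norm_image_sub_le_of_norm_fderiv_le'
      (𝕜 := ℝ) (f := f) (φ := fderiv ℝ f x) (C := K * ‖y - x‖) (x := x) (y := y)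
      (fun z _ => hdiff z) ?_ ⟨hx, by simp⟩ ⟨hy, by simp [dist_eq_norm]⟩
    · calc _ ≤ _ := this
        _ = _ := by ring
    · rintro z ⟨hz, hz'⟩
      have h1 := hK.dist_le_mul z hz x hx
      rw [dist_eq_norm] at h1
      refine h1.trans ?_
      gcongr
      simpa using hz'

theorem mf_lip {E : Type*} [NormedAddCommGroup E] [NormedSpace ℝ E]
    {f : E → E} {s : Set E} {l : ℝ} (hl : 0 ≤ l) (hlip : LipschitzOnWith l.toNNReal f s)
    {u v : ℝ → E} (hu : ∀ t, 0 ≤ t → HasDerivAt u (f (u t)) t) (hus : ∀ t, 0 ≤ t → u t ∈ s)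
    (hv : ∀ t, 0 ≤ t → HasDerivAt v (f (v t)) t) (hvs : ∀ t, 0 ≤ t → v t ∈ s)
    {t : ℝ} (ht : 0 ≤ t) : ‖u t - v t‖ ≤ ‖u 0 - v 0‖ * Real.exp (l * t) := by
  have := dist_le_of_trajectories_ODE_of_mem (v := fun _ => f) (s := fun _ => s)
    (K := l.toNNReal) (f := u) (g := v) (a := 0) (b := t) (δ := dist (u 0) (v 0))
    (fun _ _ => hlip) (fun x hx => (hu x hx.1).continuousAt.continuousWithinAt)
    (fun x hx => (hu x hx.1).hasDerivWithinAt) (fun x hx => hus x hx.1)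
    (fun x hx => (hv x hx.1).continuousAt.continuousWithinAt)
    (fun x hx => (hv x hx.1).hasDerivWithinAt) (fun x hx => hvs x hx.1) le_rfl t ⟨ht, le_rfl⟩
  rw [Real.coe_toNNReal _ hl, sub_zero, dist_eq_norm, dist_eq_norm] at this
  exact this

theorem mf_expansion {E : Type*} [NormedAddCommGroup E] [InnerProductSpace ℝ E] [CompleteSpace E]
    {f : E → E} (hf : ContDiff ℝ 2 f) {xs : E} {R l K T : ℝ} (hR : 0 ≤ R) (hl : 0 ≤ l)
    (hK : 0 ≤ K) (hT : 0 ≤ T)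
    (hbd : ∀ z ∈ Metric.closedBall xs R, ‖fderiv ℝ f z‖ ≤ l)
    (hlip : LipschitzOnWith l.toNNReal f (Metric.closedBall xs R))
    (htay : ∀ x ∈ Metric.closedBall xs R, ∀ y ∈ Metric.closedBall xs R,
        ‖f y - f x - fderiv ℝ f x (y - x)‖ ≤ K * ‖y - x‖ ^ 2)
    {z : ℝ → E} (hz : ∀ t, 0 ≤ t → HasDerivAt z (f (z t)) t)
    (hzs : ∀ t, 0 ≤ t → z t ∈ Metric.closedBall xs R) :
    ∃ p : E, inner ℝ p (f (z 0)) = ‖z T - xs‖ ^ 2 - ‖z 0 - xs‖ ^ 2 ∧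
      ∀ w : ℝ → E, (∀ t, 0 ≤ t → HasDerivAt w (f (w t)) t) →
        (∀ t, 0 ≤ t → w t ∈ Metric.closedBall xs R) →
        (∫ t in (0 : ℝ)..T, ‖w t - xs‖ ^ 2) - (∫ t in (0 : ℝ)..T, ‖z t - xs‖ ^ 2)
          ≤ inner ℝ p (w 0 - z 0) + (1 + gronwallBound 0 l (2 * R) T * K) *
            Real.exp (l * T) ^ 2 * T * ‖w 0 - z 0‖ ^ 2 := by
  have hdiff : Differentiable ℝ f := hf.differentiable (by norm_num)
  have hdfc : Continuous (fderiv ℝ f) := hf.continuous_fderiv (by norm_num)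
  have hzc : ContinuousOn z (Set.Icc 0 T) :=
    fun t ht => (hz t ht.1).continuousAt.continuousWithinAt
  have hmaps : Set.MapsTo (fun t : ℝ => T - t) (Set.Icc 0 T) (Set.Icc 0 T) := by
    intro t ht
    exact ⟨by linarith [ht.2], by linarith [ht.1]⟩
  have hzrc : ContinuousOn (fun t => z (T - t)) (Set.Icc 0 T) :=
    hzc.comp (by fun_prop) hmaps
  have hadjc : Continuous (fun A : E →L[ℝ] E => ContinuousLinearMap.adjoint A) :=
    ContinuousLinearMap.adjoint.continuous
  obtain ⟨r, hr0, hr⟩ := mf_linear (E := E) (T := T) (l := l) (β := 2 * R) hT hl (by positivity)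
    (fun t => ContinuousLinearMap.adjoint (fderiv ℝ f (z (T - t))))
    (fun t => (2 : ℝ) • (z (T - t) - xs))
    (hadjc.comp_continuousOn (hdfc.comp_continuousOn hzrc))
    ((hzrc.sub continuousOn_const).const_smul (2 : ℝ))
    (by
      intro t ht
      rw [LinearIsometryEquiv.norm_map]
      exact hbd _ (hzs _ (hmaps ht).1))
    (by
      intro t ht
      rw [norm_smul, Real.norm_of_nonneg (by norm_num : (0:ℝ) ≤ 2)]
      gcongr
      have := hzs _ (hmaps ht).1
      rwa [mem_closedBall_iff_norm] at this)
  set g := gronwallBound 0 l (2 * R) T with hg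
  set P : ℝ → E := fun t => r (T - t) with hP
  have hPT : P T = 0 := by simp [hP, hr0]
  have hPb : ∀ t ∈ Set.Icc 0 T, ‖P t‖ ≤ g := fun t ht => (hr _ (hmaps ht)).2
  have hPd : ∀ t ∈ Set.Icc 0 T, HasDerivWithinAt P
      (-(ContinuousLinearMap.adjoint (fderiv ℝ f (z t)) (P t) + (2 : ℝ) • (z t - xs)))
      (Set.Icc 0 T) t := by
    intro t ht
    have h1 := (hr _ (hmaps ht)).1
    have h2 : HasDerivWithinAt (fun t : ℝ => T - t) (-1) (Set.Icc 0 T) t := by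
      simpa using! ((hasDerivAt_id t).const_sub T).hasDerivWithinAt
    have := h1.scomp t h2 hmaps
    simpa [hP, Function.comp_def, add_comm] using! this
  have hPc : ContinuousOn P (Set.Icc 0 T) := fun t ht => (hPd t ht).continuousWithinAt
  have hg0 : 0 ≤ g := (norm_nonneg _).trans (hPb 0 ⟨le_rfl, hT⟩)
  -- pairing with a differentiable curve
  have key : ∀ (u u' : ℝ → E), (∀ t, 0 ≤ t → HasDerivAt u (u' t) t) →
      ContinuousOn u' (Set.Icc 0 T) →
      (∫ t in (0:ℝ)..T, (inner ℝ (P t) (u' t - fderiv ℝ f (z t) (u t))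
        - 2 * inner ℝ (z t - xs) (u t))) = - inner ℝ (P 0) (u 0) ∧
      IntervalIntegrable (fun t => (inner ℝ (P t) (u' t - fderiv ℝ f (z t) (u t))
        - 2 * inner ℝ (z t - xs) (u t))) volume 0 T := by
    intro u u' hu hu'
    have huc : ContinuousOn u (Set.Icc 0 T) :=
      fun t ht => (hu t ht.1).continuousAt.continuousWithinAt
    have hGint : IntervalIntegrable (fun t => (inner ℝ (P t) (u' t - fderiv ℝ f (z t) (u t))
        - 2 * inner ℝ (z t - xs) (u t))) volume 0 T := by
      apply ContinuousOn.intervalIntegrable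
      rw [Set.uIcc_of_le hT]
      have h1 : ContinuousOn (fun t => fderiv ℝ f (z t) (u t)) (Set.Icc 0 T) :=
        (hdfc.comp_continuousOn hzc).clm_apply huc
      exact (hPc.inner (𝕜 := ℝ) (hu'.sub h1)).sub
        (continuousOn_const.mul ((hzc.sub continuousOn_const).inner (𝕜 := ℝ) huc))
    refine ⟨?_, hGint⟩
    have := intervalIntegral.integral_eq_sub_of_hasDerivAt_of_le (f := fun t => inner ℝ (P t) (u t))
      hT (hPc.inner (𝕜 := ℝ) huc) (f' := fun t => (inner ℝ (P t) (u' t - fderiv ℝ f (z t) (u t))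
        - 2 * inner ℝ (z t - xs) (u t))) ?_ hGint
    · rw [this, hPT]; simp
    · intro t ht
      have h1 := (hPd t ⟨ht.1.le, ht.2.le⟩).hasDerivAt (Icc_mem_nhds ht.1 ht.2)
      have h2 := h1.inner ℝ (hu t ht.1.le)
      convert! h2 using 1
      rw [inner_neg_left, inner_add_left, ContinuousLinearMap.adjoint_inner_left, inner_smul_left,
        inner_sub_right]
      simp
      ring
  refine ⟨P 0, ?_, ?_⟩
  · have hfz : ∀ t, 0 ≤ t → HasDerivAt (fun t => f (z t)) (fderiv ℝ f (z t) (f (z t))) t :=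
      fun t ht => (hdiff (z t)).hasFDerivAt.comp_hasDerivAt t (hz t ht)
    have h1 := (key (fun t => f (z t)) (fun t => fderiv ℝ f (z t) (f (z t))) hfz
      ((hdfc.comp_continuousOn hzc).clm_apply (hf.continuous.comp_continuousOn hzc))).1
    have h2 : ∀ t, 0 ≤ t → HasDerivAt (fun t => ‖z t - xs‖ ^ 2)
        (2 * inner ℝ (z t - xs) (f (z t))) t :=
      fun t ht => ((hz t ht).sub_const xs).norm_sq
    have h3 := intervalIntegral.integral_eq_sub_of_hasDerivAt (a := 0) (b := T)
      (f := fun t => ‖z t - xs‖ ^ 2) (f' := fun t => 2 * inner ℝ (z t - xs) (f (z t)))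
      (by
        intro t ht
        rw [Set.uIcc_of_le hT] at ht
        exact h2 t ht.1)
      (by
        apply ContinuousOn.intervalIntegrable
        rw [Set.uIcc_of_le hT]
        exact continuousOn_const.mul ((hzc.sub continuousOn_const).inner (𝕜 := ℝ)
          (hf.continuous.comp_continuousOn hzc)))
    simp only [sub_self, inner_zero_right, zero_sub, intervalIntegral.integral_neg] at h1
    linarith
  · intro w hw hws
    have hwc : ContinuousOn w (Set.Icc 0 T) :=
      fun t ht => (hw t ht.1).continuousAt.continuousWithinAt
    obtain ⟨h1, h1i⟩ := key (fun t => w t - z t) (fun t => f (w t) - f (z t))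
      (fun t ht => (hw t ht).sub (hz t ht))
      ((hf.continuous.comp_continuousOn hwc).sub (hf.continuous.comp_continuousOn hzc))
    have hwi : IntervalIntegrable (fun t => ‖w t - xs‖ ^ 2) volume 0 T := by
      apply ContinuousOn.intervalIntegrable
      rw [Set.uIcc_of_le hT]
      exact (hwc.sub continuousOn_const).norm.pow 2
    have hzi : IntervalIntegrable (fun t => ‖z t - xs‖ ^ 2) volume 0 T := by
      apply ContinuousOn.intervalIntegrable
      rw [Set.uIcc_of_le hT]
      exact (hzc.sub continuousOn_const).norm.pow 2
    have hsum : (∫ t in (0 : ℝ)..T, ‖w t - xs‖ ^ 2) - (∫ t in (0 : ℝ)..T, ‖z t - xs‖ ^ 2)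
        - inner ℝ (P 0) (w 0 - z 0) = ∫ t in (0 : ℝ)..T, (‖w t - z t‖ ^ 2 +
          inner ℝ (P t) (f (w t) - f (z t) - fderiv ℝ f (z t) (w t - z t))) := by
      rw [sub_eq_add_neg _ (inner ℝ (P 0) (w 0 - z 0)), ← h1,
        ← intervalIntegral.integral_sub hwi hzi,
        ← intervalIntegral.integral_add (hwi.sub hzi) h1i]
      congr 1
      ext t
      have e : w t - xs = (w t - z t) + (z t - xs) := by abel
      rw [e, norm_add_sq_real, real_inner_comm]
      ring
    have hbound : ‖∫ t in (0 : ℝ)..T, (‖w t - z t‖ ^ 2 +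
          inner ℝ (P t) (f (w t) - f (z t) - fderiv ℝ f (z t) (w t - z t)))‖
        ≤ ((1 + g * K) * (‖w 0 - z 0‖ * Real.exp (l * T)) ^ 2) * |T - 0| := by
      apply intervalIntegral.norm_integral_le_of_norm_le_const
      intro t ht
      rw [Set.uIoc_of_le hT] at ht
      have ht0 : 0 ≤ t := ht.1.le
      have hwz : ‖w t - z t‖ ≤ ‖w 0 - z 0‖ * Real.exp (l * T) := by
        refine (mf_lip hl hlip hw hws hz hzs ht0).trans ?_
        gcongr
        exact ht.2
      have h4 : ‖inner ℝ (P t) (f (w t) - f (z t) - fderiv ℝ f (z t) (w t - z t))‖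
          ≤ g * (K * ‖w t - z t‖ ^ 2) := by
        refine (norm_inner_le_norm _ _).trans ?_
        gcongr
        · exact hPb t ⟨ht0, ht.2⟩
        · exact htay _ (hzs t ht0) _ (hws t ht0)
      refine (norm_add_le _ _).trans ?_
      rw [Real.norm_of_nonneg (by positivity : 0 ≤ ‖w t - z t‖ ^ 2)]
      calc ‖w t - z t‖ ^ 2 + _ ≤ ‖w t - z t‖ ^ 2 + g * (K * ‖w t - z t‖ ^ 2) := by gcongr
        _ = (1 + g * K) * ‖w t - z t‖ ^ 2 := by ring
        _ ≤ _ := by gcongr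
    rw [← hsum, sub_zero, abs_of_nonneg hT] at hbound
    have := (le_abs_self _).trans hbound
    calc _ ≤ inner ℝ (P 0) (w 0 - z 0) +
          (1 + g * K) * (‖w 0 - z 0‖ * Real.exp (l * T)) ^ 2 * T := by linarith
      _ = _ := by ring

theorem mf_contract {E : Type*} [NormedAddCommGroup E] [NormedSpace ℝ E]
    {D : Set E} (hD : IsCompact D) {f : E → E} {φ : ℝ → E → E}
    (hφ0 : ∀ x ∈ D, φ 0 x = x)
    (hφD : ∀ x ∈ D, ∀ t : ℝ, 0 ≤ t → φ t x ∈ D)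
    (hφderiv : ∀ x ∈ D, ∀ t : ℝ, 0 ≤ t → HasDerivAt (fun s => φ s x) (f (φ t x)) t)
    {l : ℝ} (hl : 0 ≤ l) (hlip : LipschitzOnWith l.toNNReal f D) {xs : E}
    (hGAS : ∀ x ∈ D, Tendsto (fun t => φ t x) atTop (nhds xs))
    (hLES : ∃ ε > (0 : ℝ), ∃ κ > (0 : ℝ), ∃ a > (0 : ℝ), ∀ x ∈ D, ‖x - xs‖ ≤ ε →
      ∀ t : ℝ, 0 ≤ t → ‖φ t x - xs‖ ≤ κ * ‖x - xs‖ * Real.exp (-a * t)) :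
    ∃ T : ℝ, 0 ≤ T ∧ ∀ x ∈ D, ‖φ T x - xs‖ ≤ 1 / 2 * ‖x - xs‖ := by
  obtain ⟨ε, hε, κ, hκ, a, ha, hexp⟩ := hLES
  have hsemi : ∀ x ∈ D, ∀ s, 0 ≤ s → ∀ t, 0 ≤ t → φ (s + t) x = φ t (φ s x) := by
    intro x hx s hs t ht
    have h := mf_lip (u := fun t => φ (s + t) x) (v := fun t => φ t (φ s x)) hl hlip
      (fun t ht => by
        have := hφderiv x hx (s + t) (by positivity)
        exact this.comp_const_add s t)
      (fun t ht => hφD x hx _ (by positivity))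
      (fun t ht => hφderiv _ (hφD x hx s hs) t ht)
      (fun t ht => hφD _ (hφD x hx s hs) t ht) ht
    simp only [add_zero, hφ0 _ (hφD x hx s hs), sub_self, norm_zero, zero_mul] at h
    exact sub_eq_zero.1 (norm_le_zero_iff.1 h)
  have hhit : ∃ T0 : ℝ, 0 ≤ T0 ∧ ∀ y ∈ D, ∃ t, 0 ≤ t ∧ t ≤ T0 ∧ ‖φ t y - xs‖ ≤ ε := by
    suffices H : ∃ T0 : ℝ, 0 ≤ T0 ∧ ∀ y ∈ D, y ∈ D → ∃ t, 0 ≤ t ∧ t ≤ T0 ∧ ‖φ t y - xs‖ ≤ ε by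
      obtain ⟨T0, h0, h⟩ := H
      exact ⟨T0, h0, fun y hy => h y hy hy⟩
    refine hD.induction_on (p := fun s => ∃ T0 : ℝ, 0 ≤ T0 ∧ ∀ y ∈ s, y ∈ D →
      ∃ t, 0 ≤ t ∧ t ≤ T0 ∧ ‖φ t y - xs‖ ≤ ε) ⟨0, le_rfl, by simp⟩ ?_ ?_ ?_
    · rintro s t hst ⟨T0, h0, h⟩
      exact ⟨T0, h0, fun y hy => h y (hst hy)⟩
    · rintro s t ⟨T0, h0, h⟩ ⟨T1, h1, h'⟩
      refine ⟨max T0 T1, le_max_of_le_left h0, ?_⟩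
      rintro y (hy | hy) hyD
      · obtain ⟨t, ht, ht', hh⟩ := h y hy hyD
        exact ⟨t, ht, ht'.trans (le_max_left _ _), hh⟩
      · obtain ⟨t, ht, ht', hh⟩ := h' y hy hyD
        exact ⟨t, ht, ht'.trans (le_max_right _ _), hh⟩
    · intro x hx
      have h1 : ∀ᶠ t in atTop, ‖φ t x - xs‖ < ε / 2 := by
        have := (hGAS x hx).eventually (Metric.ball_mem_nhds xs (half_pos hε))
        filter_upwards [this] with t ht
        simpa [dist_eq_norm] using ht
      obtain ⟨t, ht, ht0⟩ := (h1.and (eventually_ge_atTop 0)).exists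
      refine ⟨Metric.ball x (ε / 2 / Real.exp (l * t)), mem_nhdsWithin_of_mem_nhds
        (Metric.ball_mem_nhds _ (by positivity)), t, ht0, ?_⟩
      intro y hy hyD
      refine ⟨t, ht0, le_rfl, ?_⟩
      have h2 := mf_lip (u := fun t => φ t y) (v := fun t => φ t x) hl hlip
        (hφderiv y hyD) (hφD y hyD) (hφderiv x hx) (hφD x hx) ht0
      simp only [hφ0 y hyD, hφ0 x hx] at h2
      rw [Metric.mem_ball, dist_eq_norm, lt_div_iff₀ (Real.exp_pos _)] at hy
      have e : φ t y - xs = (φ t y - φ t x) + (φ t x - xs) := by abel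
      rw [e]
      refine (norm_add_le _ _).trans ?_
      linarith
  obtain ⟨T0, hT0, hhit⟩ := hhit
  have hsmall : ∃ T1 : ℝ, 0 ≤ T1 ∧ ∀ t, T1 ≤ t → κ * Real.exp (-a * t) ≤ 1 / 2 := by
    have h1 : Tendsto (fun t : ℝ => κ * Real.exp (-a * t)) atTop (nhds (κ * 0)) := by
      refine Tendsto.const_mul κ (Real.tendsto_exp_atBot.comp ?_)
      exact tendsto_id.const_mul_atTop_of_neg (by linarith)
    rw [mul_zero] at h1
    have h2 := (h1.eventually (gt_mem_nhds (by norm_num : (0:ℝ) < 1 / 2)))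
    obtain ⟨T1, h3⟩ := eventually_atTop.1 h2
    exact ⟨max T1 0, le_max_right _ _, fun t ht => (h3 t ((le_max_left _ _).trans ht)).le⟩
  obtain ⟨T1, hT1, hsmall⟩ := hsmall
  refine ⟨T0 + T1, by positivity, ?_⟩
  intro x hx
  by_cases hxe : ‖x - xs‖ ≤ ε
  · refine (hexp x hx hxe _ (by positivity)).trans ?_
    have := hsmall (T0 + T1) (by linarith)
    calc _ = (κ * Real.exp (-a * (T0 + T1))) * ‖x - xs‖ := by ring
      _ ≤ _ := by gcongr
  · obtain ⟨t, ht, ht', hh⟩ := hhit x hx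
    have e : T0 + T1 = t + (T0 + T1 - t) := by ring
    rw [e, hsemi x hx t ht _ (by linarith)]
    refine (hexp _ (hφD x hx t ht) hh _ (by linarith)).trans ?_
    have := hsmall (T0 + T1 - t) (by linarith)
    calc _ = (κ * Real.exp (-a * (T0 + T1 - t))) * ‖φ t x - xs‖ := by ring
      _ ≤ 1 / 2 * ‖x - xs‖ := by
        gcongr
        linarith

attribute [local instance] Classical.propDecidable

/-- For a family of CTMCs whose mean-field model is perfect, with
bounded transition rates and bounded state transitions, if the mean-field model is
globally asymptotically stable and locally exponentially stable, then the stationary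
distributions converge to the equilibrium point in the mean-square sense with rate `1/M`. -/
theorem meanfield_rate_of_convergence
    (n : ℕ) (hn : 1 ≤ n)
    (D : Set (EuclideanSpace ℝ (Fin n)))
    (hDcompact : IsCompact D)
    (hDsub : ∀ x ∈ D, ∀ i, x i ∈ Set.Icc (0 : ℝ) 1)
    (f : EuclideanSpace ℝ (Fin n) → EuclideanSpace ℝ (Fin n))
    (hf : ContDiff ℝ 2 f)
    (φ : ℝ → EuclideanSpace ℝ (Fin n) → EuclideanSpace ℝ (Fin n))
    (hφ0 : ∀ x ∈ D, φ 0 x = x)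
    (hφD : ∀ x ∈ D, ∀ t : ℝ, 0 ≤ t → φ t x ∈ D)
    (hφderiv : ∀ x ∈ D, ∀ t : ℝ, 0 ≤ t →
      HasDerivAt (fun s => φ s x) (f (φ t x)) t)
    (xstar : EuclideanSpace ℝ (Fin n)) (hxstarD : xstar ∈ D)
    (hfix : f xstar = 0)
    (huniq : ∀ x ∈ D, f x = 0 → x = xstar)
    -- global asymptotic stability
    (hGAS : ∀ x ∈ D, Tendsto (fun t => φ t x) atTop (nhds xstar))
    -- local exponential stability
    (hLES : ∃ ε > (0 : ℝ), ∃ κ > (0 : ℝ), ∃ a > (0 : ℝ), ∀ x ∈ D, ‖x - xstar‖ ≤ ε →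
      ∀ t : ℝ, 0 ≤ t → ‖φ t x - xstar‖ ≤ κ * ‖x - xstar‖ * Real.exp (-a * t))
    -- the family of CTMCs
    (S : ℕ → Finset (EuclideanSpace ℝ (Fin n)))
    (hS : ∀ M ≥ 1, ∀ x ∈ S M, x ∈ D)
    (q : ℕ → EuclideanSpace ℝ (Fin n) → EuclideanSpace ℝ (Fin n) → ℝ)
    (hq0 : ∀ M ≥ 1, ∀ x y, 0 ≤ q M x y)
    (hqdiag : ∀ M ≥ 1, ∀ x, q M x x = 0)
    (pr : ℕ → EuclideanSpace ℝ (Fin n) → ℝ)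
    (hpr01 : ∀ M ≥ 1, ∀ x ∈ S M, 0 ≤ pr M x ∧ pr M x ≤ 1)
    (hpr1 : ∀ M ≥ 1, ∑ x ∈ S M, pr M x = 1)
    -- stationarity for the CTMC with rates `Q_M(x,y) = M q_M(x,y)`
    (hstat : ∀ M ≥ 1, ∀ h : EuclideanSpace ℝ (Fin n) → ℝ,
      ∑ x ∈ S M, pr M x * ∑ y ∈ (S M).erase x, (M : ℝ) * q M x y * (h y - h x) = 0)
    -- (i) bounded transition rates
    (c : ℝ) (hc : 0 < c)
    (hrate : ∀ M ≥ 1, ∑ x ∈ S M, pr M x * ∑ y ∈ (S M).erase x, q M x y ≤ c)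
    -- (ii) bounded state transitions
    (ctilde : ℝ) (hctilde : 0 < ctilde)
    (hjump : ∀ M ≥ 1, ∀ x ∈ S M, ∀ y ∈ S M, 0 < q M x y → ‖y - x‖ ≤ ctilde / M)
    -- (iii) perfect mean-field model
    (hperfect : ∀ M ≥ 1, ∀ x ∈ S M,
      f x = (M : ℝ) • ∑ y ∈ (S M).erase x, q M x y • (y - x)) :
    ∃ C > (0 : ℝ), ∃ M₀ : ℕ, ∀ M ≥ M₀,
      ∑ x ∈ S M, pr M x * ‖x - xstar‖ ^ 2 ≤ C / M := by
  obtain ⟨R₀, hR₀⟩ := hDcompact.isBounded.subset_closedBall xstar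
  set R := max R₀ 0 with hRdef
  have hR : 0 ≤ R := le_max_right _ _
  have hDR : D ⊆ Metric.closedBall xstar R :=
    hR₀.trans (Metric.closedBall_subset_closedBall (le_max_left _ _))
  obtain ⟨l, K, hl, hK, hbd, hlip, htay⟩ := mf_taylor f hf xstar R
  obtain ⟨T, hT, hcontr⟩ := mf_contract hDcompact hφ0 hφD hφderiv hl (hlip.mono hDR) hGAS hLES
  set K' : ℝ := (1 + gronwallBound 0 l (2 * R) T * K) * Real.exp (l * T) ^ 2 * T with hK'
  set V : EuclideanSpace ℝ (Fin n) → ℝ := fun x => ∫ t in (0 : ℝ)..T, ‖φ t x - xstar‖ ^ 2 with hV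
  have hexpand : ∀ x ∈ D, ∃ p : EuclideanSpace ℝ (Fin n),
      inner ℝ p (f x) ≤ - (1 / 2) * ‖x - xstar‖ ^ 2 ∧
      ∀ y ∈ D, V y - V x ≤ inner ℝ p (y - x) + K' * ‖y - x‖ ^ 2 := by
    intro x hx
    obtain ⟨p, hp1, hp2⟩ := mf_expansion hf hR hl hK hT hbd hlip htay
      (z := fun t => φ t x) (hφderiv x hx) (fun t ht => hDR (hφD x hx t ht))
    simp only [hφ0 x hx] at hp1 hp2
    refine ⟨p, ?_, ?_⟩
    · rw [hp1]
      have h1 : ‖φ T x - xstar‖ ^ 2 ≤ (1 / 2 * ‖x - xstar‖) ^ 2 := by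
        gcongr
        exact hcontr x hx
      nlinarith [sq_nonneg ‖x - xstar‖]
    · intro y hy
      have := hp2 (fun t => φ t y) (hφderiv y hy) (fun t ht => hDR (hφD y hy t ht))
      simpa only [hφ0 y hy] using this
  choose! p hp1 hp2 using hexpand
  have hK'0 : 0 ≤ K' := by
    have hg0 : 0 ≤ gronwallBound 0 l (2 * R) T := by
      have := gronwallBound_mono (δ := 0) le_rfl (by positivity : 0 ≤ 2 * R) hl hT
      rwa [gronwallBound_x0] at this
    positivity
  refine ⟨2 * (K' * ctilde ^ 2 * c) + 1, by positivity, 1, ?_⟩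
  intro M hM
  have hM0 : (0 : ℝ) < M := by exact_mod_cast hM
  have hx1 : ∀ x ∈ S M, ∑ y ∈ (S M).erase x, (M : ℝ) * q M x y * (V y - V x)
      ≤ - (1 / 2) * ‖x - xstar‖ ^ 2 +
        K' * ctilde ^ 2 / M * ∑ y ∈ (S M).erase x, q M x y := by
    intro x hx
    have hxD := hS M hM x hx
    have hterm : ∀ y ∈ (S M).erase x, (M : ℝ) * q M x y * (V y - V x)
        ≤ (M : ℝ) * (q M x y * inner ℝ (p x) (y - x)) + K' * ctilde ^ 2 / M * q M x y := by
      intro y hy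
      have hyS := Finset.mem_of_mem_erase hy
      have hyD := hS M hM y hyS
      rcases (hq0 M hM x y).eq_or_lt with h0 | hpos
      · simp [← h0]
      · have hj := hjump M hM x hx y hyS hpos
        have h1 : ‖y - x‖ ^ 2 ≤ (ctilde / M) ^ 2 := by gcongr
        have h2 : V y - V x ≤ inner ℝ (p x) (y - x) + K' * (ctilde / M) ^ 2 :=
          (hp2 x hxD y hyD).trans (by gcongr)
        calc (M : ℝ) * q M x y * (V y - V x)
            ≤ (M : ℝ) * q M x y * (inner ℝ (p x) (y - x) + K' * (ctilde / M) ^ 2) := by gcongr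
          _ = _ := by field_simp
    refine (Finset.sum_le_sum hterm).trans ?_
    rw [Finset.sum_add_distrib, ← Finset.mul_sum, ← Finset.mul_sum]
    have h3 : (M : ℝ) * ∑ y ∈ (S M).erase x, q M x y * inner ℝ (p x) (y - x)
        = inner ℝ (p x) (f x) := by
      rw [hperfect M hM x hx, inner_smul_right, inner_sum]
      simp only [inner_smul_right]
    rw [h3]
    gcongr
    exact hp1 x hxD
  have hsum : (0 : ℝ) ≤ ∑ x ∈ S M, pr M x * (- (1 / 2) * ‖x - xstar‖ ^ 2 +
        K' * ctilde ^ 2 / M * ∑ y ∈ (S M).erase x, q M x y) := by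
    rw [← hstat M hM V]
    refine Finset.sum_le_sum fun x hx => ?_
    exact mul_le_mul_of_nonneg_left (hx1 x hx) (hpr01 M hM x hx).1
  have hsplit : ∑ x ∈ S M, pr M x * (- (1 / 2) * ‖x - xstar‖ ^ 2 +
        K' * ctilde ^ 2 / M * ∑ y ∈ (S M).erase x, q M x y)
      = - (1 / 2) * ∑ x ∈ S M, pr M x * ‖x - xstar‖ ^ 2 +
        K' * ctilde ^ 2 / M * ∑ x ∈ S M, pr M x * ∑ y ∈ (S M).erase x, q M x y := by
    rw [Finset.mul_sum, Finset.mul_sum, ← Finset.sum_add_distrib]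
    refine Finset.sum_congr rfl fun x _ => ?_
    ring
  rw [hsplit] at hsum
  have h5 : K' * ctilde ^ 2 / M * ∑ x ∈ S M, pr M x * ∑ y ∈ (S M).erase x, q M x y
      ≤ K' * ctilde ^ 2 / M * c := by
    gcongr
    exact hrate M hM
  have h6 : (2 * (K' * ctilde ^ 2 * c) + 1) / (M : ℝ)
      = 2 * (K' * ctilde ^ 2 / M * c) + 1 / M := by
    field_simp
  have h7 : (0 : ℝ) < 1 / M := by positivity
  rw [h6]
  linarith
end

section
/- Fix n ≥ 1, a compact set D ⊆ [0,1]^n, a twice continuously differentiable vector field f : ℝ^n → ℝ^n, a flow φ : [0,∞) × D → D with ∂φ/∂t(t,x) = f(φ(t,x)) and φ(0,x) = x, and a unique equilibrium point x* ∈ D (f(x*) = 0). Suppose the flow is globally asymptotically stable and locally exponentially stable. Suppose that for each integer M ≥ 1 we are given a finite set S_M ⊆ D, normalized transition rates q_M : S_M × S_M → ℝ≥0 with q_M(x,x) = 0, and a stationary distribution π_M of the continuous-time Markov chain with rates Q_M(x,y) = M·q_M(x,y), and that: (i) asymptotic accuracy: Σ_{x∈S_M} π_M(x)·‖f(x) −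 M·Σ_{y≠x} q_M(x,y)(y − x)‖ → 0 as M → ∞; (ii) Σ_{x∈S_M} π_M(x)·Σ_{y≠x} q_M(x,y)·M·‖y − x‖² → 0 as M → ∞; (iii) max{‖y − x‖ : x,y ∈ S_M, q_M(x,y) > 0} → 0 as M → ∞. Then Σ_{x∈S_M} π_M(x)·‖x − x*‖² → 0 as M → ∞; that is, the stationary distributions converge in the mean-square sense to the equilibrium point of the mean-field model. -/
open Filter MeasureTheory

section MeanFieldHelpers

variable {E : Type*} [NormedAddCommGroup E] [InnerProductSpace ℝ E]

/-- Global first order Taylor control. -/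
def TaylorCtl {G : Type*} [NormedAddCommGroup G] [NormedSpace ℝ G]
    (A B : ℝ) (h : E → G) (h' : E → E →L[ℝ] G) : Prop :=
  (∀ x, ‖h' x‖ ≤ A) ∧ (∀ x y, ‖h y - h x‖ ≤ A * ‖y - x‖) ∧
    ∀ x y, ‖h y - h x - h' x (y - x)‖ ≤ B * ‖y - x‖ ^ 2

lemma taylorCtl_of_compactSupport {G : Type*} [NormedAddCommGroup G] [NormedSpace ℝ G]
    (h : E → G) (hc : ContDiff ℝ 2 h) (hs : HasCompactSupport h) :
    ∃ A ≥ 0, ∃ B ≥ 0, TaylorCtl A B h (fderiv ℝ h) := by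
  have hc1 : ContDiff ℝ 1 (fderiv ℝ h) := hc.fderiv_right (by norm_num)
  have hs1 : HasCompactSupport (fderiv ℝ h) := hs.fderiv ℝ
  obtain ⟨A, hA⟩ := hs1.exists_bound_of_continuous hc1.continuous
  obtain ⟨B, hB⟩ := hc1.lipschitzWith_of_hasCompactSupport hs1 (by norm_num)
  have hA0 : 0 ≤ A := (norm_nonneg _).trans (hA 0)
  have hd : Differentiable ℝ h := hc.differentiable (by norm_num)
  refine ⟨A, hA0, B, B.2, hA, ?_, ?_⟩
  · intro x y
    exact Convex.norm_image_sub_le_of_norm_fderiv_le (s := Set.univ) (𝕜 := ℝ)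
      (fun z _ => hd z) (fun z _ => hA z) convex_univ trivial trivial
  · intro x y
    have := Convex.norm_image_sub_le_of_norm_hasFDerivWithin_le' (𝕜 := ℝ)
      (s := Metric.closedBall x ‖y - x‖) (f := h) (f' := fderiv ℝ h) (φ := fderiv ℝ h x)
      (C := B * ‖y - x‖) (x := x) (y := y)
      (fun z _ => (hd z).hasFDerivAt.hasFDerivWithinAt)
      (fun z hz => by
        have h1 := hB.dist_le_mul z x
        rw [dist_eq_norm] at h1
        exact h1.trans (mul_le_mul_of_nonneg_left (Metric.mem_closedBall.1 hz) B.2))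
      (convex_closedBall _ _) (by simp) (by simp [dist_eq_norm])
    calc _ ≤ _ := this
      _ = _ := by ring

lemma taylorCtl_comp_step {A B L K s : ℝ} (hA : 0 ≤ A) (hB : 0 ≤ B) (hL : 0 ≤ L)
    (hs : 0 ≤ s) {h : E → ℝ} {h' : E → E →L[ℝ] ℝ} (hh : TaylorCtl A B h h')
    {f : E → E} {f' : E → E →L[ℝ] E} (hf : TaylorCtl L K f f') :
    TaylorCtl (A * (1 + s * L)) (B * (1 + s * L) ^ 2 + A * (s * K))
      (fun x => h (x + s • f x))
      (fun x => (h' (x + s • f x)).comp (ContinuousLinearMap.id ℝ E + s • f' x)) := by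
  have hF : ∀ x y, ‖(y + s • f y) - (x + s • f x)‖ ≤ (1 + s * L) * ‖y - x‖ := by
    intro x y
    have e : (y + s • f y) - (x + s • f x) = (y - x) + s • (f y - f x) := by
      rw [smul_sub]; abel
    rw [e]
    calc _ ≤ ‖y - x‖ + ‖s • (f y - f x)‖ := norm_add_le _ _
      _ = ‖y - x‖ + s * ‖f y - f x‖ := by rw [norm_smul, Real.norm_of_nonneg hs]
      _ ≤ ‖y - x‖ + s * (L * ‖y - x‖) := by gcongr; exact hf.2.1 x y
      _ = _ := by ring
  refine ⟨fun x => ?_, fun x y => ?_, fun x y => ?_⟩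
  · refine (ContinuousLinearMap.opNorm_comp_le _ _).trans ?_
    refine mul_le_mul (hh.1 _) ?_ (norm_nonneg _) hA
    refine (norm_add_le _ _).trans (add_le_add ContinuousLinearMap.norm_id_le ?_)
    rw [norm_smul, Real.norm_of_nonneg hs]
    exact mul_le_mul_of_nonneg_left (hf.1 x) hs
  · refine (hh.2.1 _ _).trans ?_
    rw [mul_assoc]
    exact mul_le_mul_of_nonneg_left (hF x y) hA
  · set u := x + s • f x with hu
    set v := y + s • f y with hv
    have e : h v - h u - ((h' u).comp (ContinuousLinearMap.id ℝ E + s • f' x)) (y - x)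
        = (h v - h u - h' u (v - u)) + h' u (s • (f y - f x - f' x (y - x))) := by
      have : v - u = (y - x) + s • f' x (y - x) + s • (f y - f x - f' x (y - x)) := by
        rw [hu, hv]; simp only [smul_sub]; abel
      have h2 : h' u (v - u) = h' u ((y - x) + s • f' x (y - x))
          + h' u (s • (f y - f x - f' x (y - x))) := by rw [this, map_add]
      rw [h2]
      simp only [ContinuousLinearMap.comp_apply, ContinuousLinearMap.add_apply,
        ContinuousLinearMap.id_apply, ContinuousLinearMap.smul_apply]
      ring
    change ‖h v - h u - ((h' u).comp (ContinuousLinearMap.id ℝ E + s • f' x)) (y - x)‖ ≤ _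
    rw [e]
    have h1 : ‖h v - h u - h' u (v - u)‖ ≤ B * ((1 + s * L) * ‖y - x‖) ^ 2 := by
      refine (hh.2.2 u v).trans ?_
      gcongr
      exact hF x y
    have h2 : ‖h' u (s • (f y - f x - f' x (y - x)))‖ ≤ A * (s * (K * ‖y - x‖ ^ 2)) := by
      refine (ContinuousLinearMap.le_opNorm _ _).trans ?_
      refine mul_le_mul (hh.1 _) ?_ (norm_nonneg _) hA
      rw [norm_smul, Real.norm_of_nonneg hs]
      exact mul_le_mul_of_nonneg_left (hf.2.2 x y) hs
    calc _ ≤ _ := norm_add_le _ _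
      _ ≤ _ := add_le_add h1 h2
      _ = _ := by ring

lemma taylorCtl_mono {A B A' B' : ℝ} {h : E → ℝ} {h' : E → E →L[ℝ] ℝ}
    (hh : TaylorCtl A B h h') (hA : A ≤ A') (hB : B ≤ B') : TaylorCtl A' B' h h' :=
  ⟨fun x => (hh.1 x).trans hA, fun x y => (hh.2.1 x y).trans (by gcongr),
    fun x y => (hh.2.2 x y).trans (by gcongr)⟩

lemma taylorCtl_iterate {A B L K s : ℝ} (hA : 0 ≤ A) (hB : 0 ≤ B) (hL : 0 ≤ L) (hK : 0 ≤ K)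
    (hs : 0 ≤ s) {h : E → ℝ} {h' : E → E →L[ℝ] ℝ} (hh : TaylorCtl A B h h')
    {f : E → E} {f' : E → E →L[ℝ] E} (hf : TaylorCtl L K f f') (k : ℕ) :
    ∃ g', TaylorCtl (A * (1 + s * L) ^ k) (((1 + s * L) ^ k) ^ 2 * (B + k * s * K * A))
      (fun x => h ((fun x => x + s • f x)^[k] x)) g' := by
  induction k with
  | zero => exact ⟨h', by simpa using hh⟩
  | succ k ih =>
    obtain ⟨g', hg⟩ := ih
    have h1 : 1 ≤ 1 + s * L := by nlinarith [mul_nonneg hs hL]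
    have hp : 1 ≤ (1 + s * L) ^ k := one_le_pow₀ h1
    have hp1 : 1 ≤ (1 + s * L) ^ (k + 2) := one_le_pow₀ h1
    refine ⟨_, taylorCtl_mono (taylorCtl_comp_step (by positivity) (by positivity) hL hs hg hf)
      (le_of_eq (by ring)) ?_⟩
    have e : ((1 + s * L) ^ (k + 1)) ^ 2 * (B + ((k + 1 : ℕ) : ℝ) * s * K * A)
      - (((1 + s * L) ^ k) ^ 2 * (B + k * s * K * A) * (1 + s * L) ^ 2
        + A * (1 + s * L) ^ k * (s * K))
      = A * (1 + s * L) ^ k * (s * K) * ((1 + s * L) ^ (k + 2) - 1) := by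
      push_cast; ring
    have : 0 ≤ A * (1 + s * L) ^ k * (s * K) * ((1 + s * L) ^ (k + 2) - 1) :=
      mul_nonneg (by positivity) (by linarith)
    linarith

/-- Euler scheme error. -/
lemma euler_error {L C s : ℝ} (hL : 0 ≤ L) (hC : 0 ≤ C) (hs : 0 ≤ s)
    {f : E → E} (hf : ∀ x y, ‖f y - f x‖ ≤ L * ‖y - x‖) (hfC : ∀ x, ‖f x‖ ≤ C)
    (u : ℝ → E) (hu : ∀ t, 0 ≤ t → HasDerivAt u (f (u t)) t) (k : ℕ) :
    ‖(fun x => x + s • f x)^[k] (u 0) - u (k * s)‖ ≤ (1 + s * L) ^ k * (k * (L * C * s ^ 2)) := by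
  induction k with
  | zero => simp
  | succ k ih =>
    rw [Function.iterate_succ_apply']
    set w := (fun x => x + s • f x)^[k] (u 0)
    set t : ℝ := k * s with ht
    have ht0 : 0 ≤ t := by positivity
    have hk : ((k + 1 : ℕ) : ℝ) * s = t + s := by push_cast; rw [ht]; ring
    rw [hk]
    have lip : ∀ r ∈ Set.Icc t (t + s), ‖u r - u t‖ ≤ C * (r - t) := by
      apply norm_image_sub_le_of_norm_deriv_le_segment' (f' := fun r => f (u r))
      · intro r hr; exact (hu r (ht0.trans hr.1)).hasDerivWithinAt
      · intro r hr; exact hfC _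
    have loc : ∀ r ∈ Set.Icc t (t + s),
        ‖(u r - r • f (u t)) - (u t - t • f (u t))‖ ≤ L * (C * s) * (r - t) := by
      apply norm_image_sub_le_of_norm_deriv_le_segment' (f' := fun r => f (u r) - f (u t))
      · intro r hr
        have h1 := (hu r (ht0.trans hr.1)).sub ((hasDerivAt_id r).smul_const (f (u t)))
        simp only [one_smul] at h1
        exact h1.hasDerivWithinAt
      · intro r hr
        refine (hf _ _).trans ?_
        gcongr
        refine (lip r ⟨hr.1, hr.2.le⟩).trans ?_
        gcongr
        linarith [hr.2]
    have loc' := loc (t + s) ⟨by linarith, le_rfl⟩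
    have e : w + s • f w - u (t + s) = (w - u t) + s • (f w - f (u t))
        - ((u (t + s) - (t + s) • f (u t)) - (u t - t • f (u t))) := by
      simp only [smul_sub, add_smul]; abel
    have h1 : 1 ≤ 1 + s * L := by nlinarith [mul_nonneg hs hL]
    have hp1 : 1 ≤ (1 + s * L) ^ (k + 1) := one_le_pow₀ h1
    have hX : 0 ≤ L * C * s ^ 2 := by positivity
    calc ‖w + s • f w - u (t + s)‖
        ≤ ‖w - u t‖ + s * ‖f w - f (u t)‖ + L * (C * s) * (t + s - t) := by
          rw [e]
          refine (norm_sub_le _ _).trans (add_le_add ((norm_add_le _ _).trans ?_) loc')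
          rw [norm_smul, Real.norm_of_nonneg hs]
      _ ≤ ‖w - u t‖ + s * (L * ‖w - u t‖) + L * (C * s) * (t + s - t) := by
          gcongr; exact hf _ _
      _ = (1 + s * L) * ‖w - u t‖ + L * C * s ^ 2 := by ring
      _ ≤ (1 + s * L) * ((1 + s * L) ^ k * (k * (L * C * s ^ 2))) + L * C * s ^ 2 := by
          gcongr
      _ ≤ (1 + s * L) * ((1 + s * L) ^ k * (k * (L * C * s ^ 2)))
          + (1 + s * L) ^ (k + 1) * (L * C * s ^ 2) := by nlinarith
      _ = _ := by push_cast; ring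

/-- Generator estimate from stationarity. -/
lemma generator_bound {A B : ℝ} {h : E → ℝ} {h' : E → E →L[ℝ] ℝ}
    (hh : TaylorCtl A B h h') (hA : 0 ≤ A) (f : E → E) (S : Finset E) (p : E → ℝ)
    (hp : ∀ x ∈ S, 0 ≤ p x) (m : ℝ) (hm : 0 ≤ m) (q : E → E → ℝ) (hq : ∀ x y, 0 ≤ q x y)
    (N : E → Finset E)
    (hstat : ∑ x ∈ S, p x * ∑ y ∈ N x, m * q x y * (h y - h x) = 0) :
    |∑ x ∈ S, p x * h' x (f x)| ≤
      A * (∑ x ∈ S, p x * ‖f x - m • ∑ y ∈ N x, q x y • (y - x)‖)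
      + B * ∑ x ∈ S, p x * ∑ y ∈ N x, q x y * m * ‖y - x‖ ^ 2 := by
  have key : ∀ x, |h' x (f x) - ∑ y ∈ N x, m * q x y * (h y - h x)| ≤
      A * ‖f x - m • ∑ y ∈ N x, q x y • (y - x)‖
        + B * ∑ y ∈ N x, q x y * m * ‖y - x‖ ^ 2 := by
    intro x
    have e : h' x (f x) - ∑ y ∈ N x, m * q x y * (h y - h x)
        = h' x (f x - m • ∑ y ∈ N x, q x y • (y - x))
          - ∑ y ∈ N x, m * q x y * (h y - h x - h' x (y - x)) := by
      rw [map_sub, map_smul, map_sum, smul_eq_mul, Finset.mul_sum]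
      simp only [mul_sub, map_smul, smul_eq_mul, Finset.sum_sub_distrib, mul_assoc]
      ring
    rw [e]
    refine (abs_sub _ _).trans (add_le_add ?_ ?_)
    · refine ((h' x).le_opNorm _).trans ?_
      gcongr
      exact hh.1 x
    · refine (Finset.abs_sum_le_sum_abs _ _).trans ?_
      rw [Finset.mul_sum]
      refine Finset.sum_le_sum fun y _ => ?_
      have hmq : 0 ≤ m * q x y := mul_nonneg hm (hq x y)
      rw [abs_mul, abs_of_nonneg hmq]
      calc _ ≤ m * q x y * (B * ‖y - x‖ ^ 2) := by
            gcongr; exact hh.2.2 x y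
        _ = _ := by ring
  have e2 : ∑ x ∈ S, p x * h' x (f x) =
      ∑ x ∈ S, p x * (h' x (f x) - ∑ y ∈ N x, m * q x y * (h y - h x)) := by
    rw [← sub_zero (∑ x ∈ S, p x * h' x (f x)), ← hstat, ← Finset.sum_sub_distrib]
    exact Finset.sum_congr rfl fun x _ => (mul_sub _ _ _).symm
  rw [e2]
  refine (Finset.abs_sum_le_sum_abs _ _).trans ?_
  rw [Finset.mul_sum, Finset.mul_sum, ← Finset.sum_add_distrib]
  refine Finset.sum_le_sum fun x hx => ?_
  rw [abs_mul, abs_of_nonneg (hp x hx)]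
  calc _ ≤ _ := mul_le_mul_of_nonneg_left (key x) (hp x hx)
    _ = _ := by ring

/-- One step of the Euler scheme, in expectation. -/
lemma euler_step_expect {A B C s : ℝ} {h : E → ℝ} {h' : E → E →L[ℝ] ℝ}
    (hh : TaylorCtl A B h h') (hB : 0 ≤ B) (hs : 0 ≤ s) (f : E → E) (hfC : ∀ x, ‖f x‖ ≤ C)
    (S : Finset E) (p : E → ℝ) (hp : ∀ x ∈ S, 0 ≤ p x) (hp1 : ∑ x ∈ S, p x = 1) :
    |∑ x ∈ S, p x * h (x + s • f x) - ∑ x ∈ S, p x * h x| ≤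
      s * |∑ x ∈ S, p x * h' x (f x)| + B * (s * C) ^ 2 := by
  have e : ∑ x ∈ S, p x * h (x + s • f x) - ∑ x ∈ S, p x * h x
      = s * ∑ x ∈ S, p x * h' x (f x)
        + ∑ x ∈ S, p x * (h (x + s • f x) - h x - h' x (s • f x)) := by
    rw [Finset.mul_sum, ← Finset.sum_sub_distrib, ← Finset.sum_add_distrib]
    refine Finset.sum_congr rfl fun x _ => ?_
    rw [map_smul, smul_eq_mul]; ring
  rw [e]
  refine (abs_add_le _ _).trans (add_le_add (by rw [abs_mul, abs_of_nonneg hs]) ?_)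
  refine (Finset.abs_sum_le_sum_abs _ _).trans ?_
  calc _ ≤ ∑ x ∈ S, p x * (B * (s * C) ^ 2) := by
        refine Finset.sum_le_sum fun x hx => ?_
        rw [abs_mul, abs_of_nonneg (hp x hx)]
        refine mul_le_mul_of_nonneg_left ?_ (hp x hx)
        have := hh.2.2 x (x + s • f x)
        rw [add_sub_cancel_left, norm_smul, Real.norm_of_nonneg hs] at this
        refine this.trans ?_
        gcongr
        exact hfC x
    _ = _ := by rw [← Finset.sum_mul, hp1, one_mul]

/-- The whole Euler scheme, in expectation, with the flow at the end. -/
lemma flow_expect_bound {A B L K C T : ℝ} (hA : 0 ≤ A) (hB : 0 ≤ B) (hL : 0 ≤ L) (hK : 0 ≤ K)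
    (hC : 0 ≤ C) (hT : 0 ≤ T)
    {h : E → ℝ} {h' : E → E →L[ℝ] ℝ} (hh : TaylorCtl A B h h')
    {f : E → E} {f' : E → E →L[ℝ] E} (hf : TaylorCtl L K f f') (hfC : ∀ x, ‖f x‖ ≤ C)
    (φ : ℝ → E → E) (N : ℕ) (hN : 0 < N)
    (S : Finset E) (hφ0 : ∀ x ∈ S, φ 0 x = x)
    (hφ : ∀ x ∈ S, ∀ t : ℝ, 0 ≤ t → HasDerivAt (fun s => φ s x) (f (φ t x)) t)
    (p : E → ℝ) (hp : ∀ x ∈ S, 0 ≤ p x) (hp1 : ∑ x ∈ S, p x = 1)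
    (m : ℝ) (hm : 0 ≤ m) (q : E → E → ℝ) (hq : ∀ x y, 0 ≤ q x y) (Nb : E → Finset E)
    (hstat : ∀ h : E → ℝ, ∑ x ∈ S, p x * ∑ y ∈ Nb x, m * q x y * (h y - h x) = 0) :
    |∑ x ∈ S, p x * h (φ T x) - ∑ x ∈ S, p x * h x| ≤
      T * (A * Real.exp (L * T) * (∑ x ∈ S, p x * ‖f x - m • ∑ y ∈ Nb x, q x y • (y - x)‖)
      + (Real.exp (L * T)) ^ 2 * (B + T * K * A) *
          ∑ x ∈ S, p x * ∑ y ∈ Nb x, q x y * m * ‖y - x‖ ^ 2)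
      + ((Real.exp (L * T)) ^ 2 * (B + T * K * A) * C ^ 2 * T ^ 2
          + A * Real.exp (L * T) * L * C * T ^ 2) / N := by
  set acc := ∑ x ∈ S, p x * ‖f x - m • ∑ y ∈ Nb x, q x y • (y - x)‖
  set sec := ∑ x ∈ S, p x * ∑ y ∈ Nb x, q x y * m * ‖y - x‖ ^ 2
  set X := Real.exp (L * T) with hX
  have hX0 : 0 < X := Real.exp_pos _
  set B' := X ^ 2 * (B + T * K * A) with hB'
  have hB'0 : 0 ≤ B' := by positivity
  have hNR : (0 : ℝ) < N := by exact_mod_cast hN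
  set s : ℝ := T / N with hs_def
  have hs : 0 ≤ s := by positivity
  have hNs : N * s = T := by rw [hs_def]; field_simp
  have h1 : 1 ≤ 1 + s * L := by nlinarith [mul_nonneg hs hL]
  have hpow : ∀ k ≤ N, (1 + s * L) ^ k ≤ X := by
    intro k hk
    calc (1 + s * L) ^ k ≤ (1 + s * L) ^ N := pow_le_pow_right₀ h1 hk
      _ ≤ (Real.exp (s * L)) ^ N := by
          gcongr
          linarith [Real.add_one_le_exp (s * L)]
      _ = X := by rw [← Real.exp_nat_mul, hX, ← hNs]; congr 1; ring
  have step : ∀ k ≤ N, |∑ x ∈ S, p x * h ((fun x => x + s • f x)^[k] x) - ∑ x ∈ S, p x * h x| ≤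
      k * (s * (A * X * acc + B' * sec) + B' * (s * C) ^ 2) := by
    intro k
    induction k with
    | zero => intro _; simp
    | succ k ih =>
      intro hk
      have ih := ih (by omega)
      obtain ⟨g', hg⟩ := taylorCtl_iterate hA hB hL hK hs hh hf k
      have hpk := hpow k (by omega)
      have hks : k * s ≤ T := by
        rw [← hNs]; gcongr; omega
      have hp0 : 0 ≤ (1 + s * L) ^ k := by positivity
      have hg2 : TaylorCtl (A * X) B' (fun x => h ((fun x => x + s • f x)^[k] x)) g' := by
        refine taylorCtl_mono hg (by gcongr) ?_
        rw [hB']; gcongr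
      have hgen := generator_bound hg2 (by positivity) f S p hp m hm q hq Nb (hstat _)
      have hst := euler_step_expect hg2 hB'0 hs f hfC S p hp hp1
      have hst2 : |∑ x ∈ S, p x * h ((fun x => x + s • f x)^[k + 1] x)
          - ∑ x ∈ S, p x * h ((fun x => x + s • f x)^[k] x)| ≤
          s * (A * X * acc + B' * sec) + B' * (s * C) ^ 2 := by
        refine le_trans hst ?_
        gcongr
      calc _ ≤ _ := abs_sub_le _ (∑ x ∈ S, p x * h ((fun x => x + s • f x)^[k] x)) _
        _ ≤ _ := add_le_add hst2 ih
        _ = _ := by push_cast; ring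
  have fin := step N le_rfl
  have last : |∑ x ∈ S, p x * h (φ T x) - ∑ x ∈ S, p x * h ((fun x => x + s • f x)^[N] x)| ≤
      A * (X * (N * (L * C * s ^ 2))) := by
    rw [← Finset.sum_sub_distrib]
    refine (Finset.abs_sum_le_sum_abs _ _).trans ?_
    calc _ ≤ ∑ x ∈ S, p x * (A * (X * (N * (L * C * s ^ 2)))) := by
          refine Finset.sum_le_sum fun x hx => ?_
          rw [← mul_sub, abs_mul, abs_of_nonneg (hp x hx)]
          refine mul_le_mul_of_nonneg_left ?_ (hp x hx)
          refine (hh.2.1 _ _).trans ?_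
          refine mul_le_mul_of_nonneg_left ?_ hA
          have := euler_error hL hC hs hf.2.1 hfC (fun t => φ t x) (hφ x hx) N
          rw [hNs, hφ0 x hx, norm_sub_rev] at this
          refine this.trans ?_
          gcongr
          exact hpow N le_rfl
      _ = _ := by rw [← Finset.sum_mul, hp1, one_mul]
  calc _ ≤ _ := abs_sub_le _ (∑ x ∈ S, p x * h ((fun x => x + s • f x)^[N] x)) _
    _ ≤ _ := add_le_add last fin
    _ = _ := by rw [hs_def]; field_simp; ring

/-- Uniform attraction on compact sets. -/
lemma uniform_attraction (D : Set E) (hD : IsCompact D) (f : E → E) (L : NNReal)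
    (hf : LipschitzWith L f) (φ : ℝ → E → E) (hφ0 : ∀ x ∈ D, φ 0 x = x)
    (hφD : ∀ x ∈ D, ∀ t : ℝ, 0 ≤ t → φ t x ∈ D)
    (hφ : ∀ x ∈ D, ∀ t : ℝ, 0 ≤ t → HasDerivAt (fun s => φ s x) (f (φ t x)) t)
    (xs : E) (hGAS : ∀ x ∈ D, Tendsto (fun t => φ t x) atTop (nhds xs))
    (hLES : ∃ ε > (0 : ℝ), ∃ κ > (0 : ℝ), ∃ a > (0 : ℝ), ∀ x ∈ D, ‖x - xs‖ ≤ ε →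
      ∀ t : ℝ, 0 ≤ t → ‖φ t x - xs‖ ≤ κ * ‖x - xs‖ * Real.exp (-a * t))
    (η : ℝ) (hη : 0 < η) : ∃ T ≥ 0, ∀ x ∈ D, ‖φ T x - xs‖ ≤ η := by
  obtain ⟨ε, hε, κ, hκ, a, ha, hles⟩ := hLES
  have dep : ∀ x ∈ D, ∀ y ∈ D, ∀ t, 0 ≤ t →
      dist (φ t x) (φ t y) ≤ dist x y * Real.exp (L * t) := by
    intro x hx y hy t ht
    have := dist_le_of_trajectories_ODE (v := fun _ => f) (K := L) (a := 0) (b := t)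
      (f := fun s => φ s x) (g := fun s => φ s y) (δ := dist x y) (fun _ => hf)
      (fun r hr => (hφ x hx r hr.1).continuousAt.continuousWithinAt)
      (fun r hr => (hφ x hx r hr.1).hasDerivWithinAt)
      (fun r hr => (hφ y hy r hr.1).continuousAt.continuousWithinAt)
      (fun r hr => (hφ y hy r hr.1).hasDerivWithinAt)
      (by simp [hφ0 x hx, hφ0 y hy]) t ⟨ht, le_rfl⟩
    simpa using this
  have semi : ∀ x ∈ D, ∀ t, 0 ≤ t → ∀ s, 0 ≤ s → φ (t + s) x = φ s (φ t x) := by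
    intro x hx t ht s hs
    have hy := hφD x hx t ht
    have := dist_le_of_trajectories_ODE (v := fun _ => f) (K := L) (a := 0) (b := s)
      (f := fun r => φ (t + r) x) (g := fun r => φ r (φ t x)) (δ := 0) (fun _ => hf)
      (fun r hr => ((hφ x hx (t + r) (add_nonneg ht hr.1)).comp_const_add
        t r).continuousAt.continuousWithinAt)
      (fun r hr => ((hφ x hx (t + r) (add_nonneg ht hr.1)).comp_const_add
        t r).hasDerivWithinAt)
      (fun r hr => (hφ _ hy r hr.1).continuousAt.continuousWithinAt)
      (fun r hr => (hφ _ hy r hr.1).hasDerivWithinAt)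
      (by simp [hφ0 _ hy]) s ⟨hs, le_rfl⟩
    exact dist_le_zero.1 (by simpa using this)
  set ρ := min ε (η / κ) with hρ
  have hρ0 : 0 < ρ := lt_min hε (by positivity)
  have absorb : ∀ x ∈ D, ∀ t, 0 ≤ t → ‖φ t x - xs‖ ≤ ρ → ∀ T ≥ t, ‖φ T x - xs‖ ≤ η := by
    intro x hx t ht hc T hT
    have h1 := hles _ (hφD x hx t ht) (hc.trans (min_le_left _ _)) (T - t) (by linarith)
    rw [← semi x hx t ht (T - t) (by linarith), add_sub_cancel] at h1
    refine h1.trans ?_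
    have h2 : Real.exp (-a * (T - t)) ≤ 1 := Real.exp_le_one_iff.2 (by nlinarith)
    have h3 : κ * ‖φ t x - xs‖ ≤ η := by
      have := hc.trans (min_le_right _ _)
      rw [le_div_iff₀ hκ] at this
      linarith
    have h4 : 0 ≤ κ * ‖φ t x - xs‖ := by positivity
    calc _ ≤ κ * ‖φ t x - xs‖ * 1 := by gcongr
      _ ≤ η := by linarith
  have ev : ∀ x ∈ D, ∃ t, 0 ≤ t ∧ ‖φ t x - xs‖ ≤ ρ / 2 := by
    intro x hx
    have h1 := (hGAS x hx).eventually (Metric.closedBall_mem_nhds xs (half_pos hρ0))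
    obtain ⟨t, ht1, ht2⟩ := (h1.and (eventually_ge_atTop 0)).exists
    exact ⟨t, ht2, by simpa [dist_eq_norm] using ht1⟩
  choose! τ hτ0 hτ using ev
  obtain ⟨F, hFD, hF⟩ := hD.elim_nhds_subcover
    (fun x => Metric.ball x (ρ / 2 * Real.exp (-(L * τ x))))
    (fun x _ => Metric.ball_mem_nhds _ (by positivity))
  refine ⟨∑ x ∈ F, τ x, Finset.sum_nonneg fun x hx => hτ0 x (hFD x hx), fun y hy => ?_⟩
  obtain ⟨x, hxF, hyx⟩ := Set.mem_iUnion₂.1 (hF hy)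
  have hx := hFD x hxF
  refine absorb y hy (τ x) (hτ0 x hx) ?_ _
    (Finset.single_le_sum (f := τ) (fun z hz => hτ0 z (hFD z hz)) hxF)
  have h1 := dep y hy x hx (τ x) (hτ0 x hx)
  have h2 : dist y x * Real.exp (L * τ x) ≤ ρ / 2 := by
    have h3 := (Metric.mem_ball.1 hyx).le
    calc _ ≤ ρ / 2 * Real.exp (-(L * τ x)) * Real.exp (L * τ x) := by gcongr
      _ = ρ / 2 := by rw [mul_assoc, ← Real.exp_add]; simp
  calc ‖φ (τ x) y - xs‖ ≤ ‖φ (τ x) y - φ (τ x) x‖ + ‖φ (τ x) x - xs‖ := norm_sub_le_norm_sub_add_norm_sub _ _ _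
    _ ≤ ρ / 2 + ρ / 2 := add_le_add (by rw [← dist_eq_norm]; exact h1.trans h2) (hτ x hx)
    _ = ρ := by ring

end MeanFieldHelpers

attribute [local instance] Classical.propDecidable

/-- If the mean-field model is asymptotically accurate (instead of perfect),
with vanishing second-moment of jumps and vanishing jump sizes, and the mean-field model is
globally asymptotically stable and locally exponentially stable, then the stationary
distributions converge in the mean-square sense to the equilibrium point. -/
theorem meanfield_convergence_asymptotically_accurate
    (n : ℕ) (hn : 1 ≤ n)
    (D : Set (EuclideanSpace ℝ (Fin n)))
    (hDcompact : IsCompact D)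
    (hDsub : ∀ x ∈ D, ∀ i, x i ∈ Set.Icc (0 : ℝ) 1)
    (f : EuclideanSpace ℝ (Fin n) → EuclideanSpace ℝ (Fin n))
    (hf : ContDiff ℝ 2 f)
    (φ : ℝ → EuclideanSpace ℝ (Fin n) → EuclideanSpace ℝ (Fin n))
    (hφ0 : ∀ x ∈ D, φ 0 x = x)
    (hφD : ∀ x ∈ D, ∀ t : ℝ, 0 ≤ t → φ t x ∈ D)
    (hφderiv : ∀ x ∈ D, ∀ t : ℝ, 0 ≤ t →
      HasDerivAt (fun s => φ s x) (f (φ t x)) t)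
    (xstar : EuclideanSpace ℝ (Fin n)) (hxstarD : xstar ∈ D)
    (hfix : f xstar = 0)
    (huniq : ∀ x ∈ D, f x = 0 → x = xstar)
    -- global asymptotic stability
    (hGAS : ∀ x ∈ D, Tendsto (fun t => φ t x) atTop (nhds xstar))
    -- local exponential stability
    (hLES : ∃ ε > (0 : ℝ), ∃ κ > (0 : ℝ), ∃ a > (0 : ℝ), ∀ x ∈ D, ‖x - xstar‖ ≤ ε →
      ∀ t : ℝ, 0 ≤ t → ‖φ t x - xstar‖ ≤ κ * ‖x - xstar‖ * Real.exp (-a * t))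
    -- the family of CTMCs
    (S : ℕ → Finset (EuclideanSpace ℝ (Fin n)))
    (hS : ∀ M ≥ 1, ∀ x ∈ S M, x ∈ D)
    (q : ℕ → EuclideanSpace ℝ (Fin n) → EuclideanSpace ℝ (Fin n) → ℝ)
    (hq0 : ∀ M ≥ 1, ∀ x y, 0 ≤ q M x y)
    (hqdiag : ∀ M ≥ 1, ∀ x, q M x x = 0)
    (pr : ℕ → EuclideanSpace ℝ (Fin n) → ℝ)
    (hpr01 : ∀ M ≥ 1, ∀ x ∈ S M, 0 ≤ pr M x ∧ pr M x ≤ 1)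
    (hpr1 : ∀ M ≥ 1, ∑ x ∈ S M, pr M x = 1)
    -- stationarity for the CTMC with rates `Q_M(x,y) = M q_M(x,y)`
    (hstat : ∀ M ≥ 1, ∀ h : EuclideanSpace ℝ (Fin n) → ℝ,
      ∑ x ∈ S M, pr M x * ∑ y ∈ (S M).erase x, (M : ℝ) * q M x y * (h y - h x) = 0)
    -- (i) asymptotic accuracy of the mean-field model
    (haccurate : Tendsto (fun M : ℕ =>
        ∑ x ∈ S M, pr M x *
          ‖f x - (M : ℝ) • ∑ y ∈ (S M).erase x, q M x y • (y - x)‖)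
      atTop (nhds 0))
    -- (ii) vanishing expected second moment of the jumps
    (hsecond : Tendsto (fun M : ℕ =>
        ∑ x ∈ S M, pr M x * ∑ y ∈ (S M).erase x, q M x y * (M : ℝ) * ‖y - x‖ ^ 2)
      atTop (nhds 0))
    -- (iii) vanishing jump sizes
    (hjump : ∀ δ > (0 : ℝ), ∃ M₀ : ℕ, ∀ M ≥ M₀, ∀ x ∈ S M, ∀ y ∈ S M,
      0 < q M x y → ‖y - x‖ ≤ δ) :
    Tendsto (fun M : ℕ => ∑ x ∈ S M, pr M x * ‖x - xstar‖ ^ 2) atTop (nhds 0) := by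
  obtain ⟨R, hR0, hR⟩ : ∃ R > (0:ℝ), ∀ x ∈ D, x ∈ Metric.closedBall xstar R := by
    obtain ⟨R, hR⟩ := hDcompact.isBounded.subset_closedBall xstar
    exact ⟨max R 1, by positivity, fun x hx =>
      Metric.closedBall_subset_closedBall (le_max_left _ _) (hR hx)⟩
  let χ : ContDiffBump xstar := ⟨R, R + 1, hR0, by linarith⟩
  have hχ : ∀ x ∈ D, χ x = 1 := fun x hx => χ.one_of_mem_closedBall (hR x hx)
  have hχc : HasCompactSupport (χ : EuclideanSpace ℝ (Fin n) → ℝ) := χ.hasCompactSupport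
  have hχd : ContDiff ℝ 2 (χ : EuclideanSpace ℝ (Fin n) → ℝ) := χ.contDiff
  let F : EuclideanSpace ℝ (Fin n) → EuclideanSpace ℝ (Fin n) := fun x => χ x • f x
  let g : EuclideanSpace ℝ (Fin n) → ℝ := fun x => χ x • ‖x - xstar‖ ^ 2
  have hFD : ∀ x ∈ D, F x = f x := fun x hx => by simp [F, hχ x hx]
  have hgD : ∀ x ∈ D, g x = ‖x - xstar‖ ^ 2 := fun x hx => by simp [g, hχ x hx]
  have hFc : HasCompactSupport F := hχc.smul_right
  have hgc : HasCompactSupport g := hχc.smul_right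
  have hFd : ContDiff ℝ 2 F := hχd.smul hf
  have hgd : ContDiff ℝ 2 g := hχd.smul ((contDiff_id.sub contDiff_const).norm_sq ℝ)
  obtain ⟨L, hL, K, hK, hFT⟩ := taylorCtl_of_compactSupport F hFd hFc
  obtain ⟨A, hA, B, hB, hgT⟩ := taylorCtl_of_compactSupport g hgd hgc
  obtain ⟨C, hC⟩ := hFc.exists_bound_of_continuous hFd.continuous
  have hC0 : 0 ≤ C := (norm_nonneg _).trans (hC 0)
  have hφF : ∀ x ∈ D, ∀ t : ℝ, 0 ≤ t → HasDerivAt (fun s => φ s x) (F (φ t x)) t :=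
    fun x hx t ht => by rw [hFD _ (hφD x hx t ht)]; exact hφderiv x hx t ht
  have hFLip : LipschitzWith L.toNNReal F := by
    refine LipschitzWith.of_dist_le_mul fun x y => ?_
    rw [dist_eq_norm, dist_eq_norm, Real.coe_toNNReal _ hL]
    exact hFT.2.1 y x
  rw [Metric.tendsto_atTop]
  intro η hη
  obtain ⟨T, hT, hTU⟩ := uniform_attraction D hDcompact F L.toNNReal hFLip φ hφ0 hφD hφF xstar
    hGAS hLES (Real.sqrt (η / 4)) (Real.sqrt_pos.2 (by positivity))
  set c1 := A * Real.exp (L * T)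
  set c2 := (Real.exp (L * T)) ^ 2 * (B + T * K * A)
  set c3 := c2 * C ^ 2 * T ^ 2 + c1 * L * C * T ^ 2 with hc3
  obtain ⟨N, hN⟩ := exists_nat_gt (max 1 (c3 / (η / 4)))
  have hN1 : (1 : ℝ) < N := (le_max_left _ _).trans_lt hN
  have hN0 : (0 : ℝ) < N := by linarith
  have hN2 : c3 / N < η / 4 := by
    have := (le_max_right _ _).trans_lt hN
    rw [div_lt_iff₀ (by positivity)] at this
    rw [div_lt_iff₀ hN0]; linarith
  have hlim := ((haccurate.const_mul c1).add (hsecond.const_mul c2)).const_mul T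
  simp only [mul_zero, add_zero] at hlim
  obtain ⟨M0, hM0⟩ := (Metric.tendsto_atTop.1 hlim) (η / 4) (by positivity)
  refine ⟨max M0 1, fun M hM => ?_⟩
  have hM1 : M ≥ 1 := (le_max_right _ _).trans hM
  have hsmall := hM0 M ((le_max_left _ _).trans hM)
  rw [Real.dist_eq, sub_zero] at hsmall ⊢
  have hsmall := (le_abs_self _).trans_lt hsmall
  have hb := flow_expect_bound hA hB hL hK hC0 hT hgT hFT hC φ N (by exact_mod_cast hN0) (S M)
    (fun x hx => hφ0 x (hS M hM1 x hx)) (fun x hx => hφF x (hS M hM1 x hx)) (pr M)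
    (fun x hx => (hpr01 M hM1 x hx).1) (hpr1 M hM1) M (Nat.cast_nonneg M) (q M) (hq0 M hM1)
    (fun x => (S M).erase x) (hstat M hM1)
  have e1 : ∑ x ∈ S M, pr M x * ‖F x - (M : ℝ) • ∑ y ∈ (S M).erase x, q M x y • (y - x)‖
      = ∑ x ∈ S M, pr M x * ‖f x - (M : ℝ) • ∑ y ∈ (S M).erase x, q M x y • (y - x)‖ :=
    Finset.sum_congr rfl fun x hx => by rw [hFD x (hS M hM1 x hx)]
  have e2 : ∑ x ∈ S M, pr M x * g x = ∑ x ∈ S M, pr M x * ‖x - xstar‖ ^ 2 :=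
    Finset.sum_congr rfl fun x hx => by rw [hgD x (hS M hM1 x hx)]
  have e3 : ∑ x ∈ S M, pr M x * g (φ T x) ≤ η / 4 := by
    calc _ ≤ ∑ x ∈ S M, pr M x * (η / 4) := by
          refine Finset.sum_le_sum fun x hx => ?_
          refine mul_le_mul_of_nonneg_left ?_ (hpr01 M hM1 x hx).1
          have hx := hS M hM1 x hx
          rw [hgD _ (hφD x hx T hT)]
          calc _ ≤ Real.sqrt (η / 4) ^ 2 := by
                gcongr
                exact hTU x hx
            _ = η / 4 := Real.sq_sqrt (by positivity)
      _ = _ := by rw [← Finset.sum_mul, hpr1 M hM1, one_mul]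
  rw [e1, e2, ← hc3] at hb
  have hpos : 0 ≤ ∑ x ∈ S M, pr M x * ‖x - xstar‖ ^ 2 :=
    Finset.sum_nonneg fun x hx => mul_nonneg (hpr01 M hM1 x hx).1 (by positivity)
  rw [abs_of_nonneg hpos]
  have hb2 := (abs_le.1 hb).1
  linarith
end

section
/- Let D ⊆ [0,1]^n be compact, f : ℝ^n → ℝ^n a vector field with f(0) = 0 whose Jacobian matrix Df is Lipschitz with constant L, and φ : [0,∞) × D → D a flow with ∂φ/∂t(t,x) = f(φ(t,x)), φ(0,x) = x, that is globally exponentially stable with equilibrium 0: there exist κ, α > 0 with ‖φ(t,x)‖ ≤ κ‖x‖e^{−αt} for all x ∈ D, t ≥ 0. Let P be a real symmetric positive definite n×n matrix satisfying 2 yᵀP·Df(0)·y ≤ −‖y‖² for all y ∈ ℝ^n, with smallest and largest eigenvalues λ_min(P) and λ_max(P). Fix x ∈ D and z ∈ ℝ^n, and let x¹ : [0,∞) → ℝ^n solve the first-order (variational) system ẋ¹(t) = Df(φ(t,x))·x¹(t) with x¹(0) = z. Then for all t ≥ 0: ‖x¹(t)‖² ≤ (zᵀPz / λ_min(P)) ·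 exp( 2λ_max(P)·L·κ·‖x‖ / (α·λ_min(P)) ) · exp( −t / λ_max(P) ). In particular, the first-order system is exponentially stable. -/
open Filter MeasureTheory Matrix

theorem aux_eig {n : ℕ} {P : Matrix (Fin n) (Fin n) ℝ} (hP : P.IsHermitian)
    (y : EuclideanSpace ℝ (Fin n)) (i : Fin n) :
    inner ℝ (hP.eigenvectorBasis i) (Matrix.toEuclideanCLM (n := Fin n) (𝕜 := ℝ) P y)
      = hP.eigenvalues i * inner ℝ (hP.eigenvectorBasis i) y := by
  have h1 := hP.mulVec_eigenvectorBasis i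
  simp only [EuclideanSpace.inner_eq_star_dotProduct, Matrix.ofLp_toEuclideanCLM, star_trivial]
  have hT : Pᵀ = P := by simpa using hP.eq
  rw [dotProduct_comm, Matrix.dotProduct_mulVec, ← Matrix.mulVec_transpose, hT, h1,
    smul_dotProduct, dotProduct_comm, smul_eq_mul]

theorem aux_quad {n : ℕ} {P : Matrix (Fin n) (Fin n) ℝ} (hP : P.IsHermitian)
    (y : EuclideanSpace ℝ (Fin n)) :
    inner ℝ y (Matrix.toEuclideanCLM (n := Fin n) (𝕜 := ℝ) P y)
      = ∑ i, hP.eigenvalues i * (inner ℝ (hP.eigenvectorBasis i) y) ^ 2 := by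
  rw [← hP.eigenvectorBasis.sum_inner_mul_inner]
  refine Finset.sum_congr rfl fun i _ => ?_
  rw [aux_eig, real_inner_comm]
  ring

theorem aux_norm {n : ℕ} {P : Matrix (Fin n) (Fin n) ℝ} (hP : P.IsHermitian)
    (y : EuclideanSpace ℝ (Fin n)) :
    ‖y‖ ^ 2 = ∑ i, (inner ℝ (hP.eigenvectorBasis i) y) ^ 2 := by
  rw [← real_inner_self_eq_norm_sq, ← hP.eigenvectorBasis.sum_inner_mul_inner]
  refine Finset.sum_congr rfl fun i _ => ?_
  rw [real_inner_comm]
  ring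

theorem aux_dot {n : ℕ} (P : Matrix (Fin n) (Fin n) ℝ) (y w : EuclideanSpace ℝ (Fin n)) :
    (y : Fin n → ℝ) ⬝ᵥ P.mulVec (w : Fin n → ℝ)
      = inner ℝ y (Matrix.toEuclideanCLM (n := Fin n) (𝕜 := ℝ) P w) := by
  simp only [EuclideanSpace.inner_eq_star_dotProduct, Matrix.ofLp_toEuclideanCLM, star_trivial]
  rw [dotProduct_comm]

theorem aux_symm {n : ℕ} {P : Matrix (Fin n) (Fin n) ℝ} (hP : P.IsHermitian)
    (y w : EuclideanSpace ℝ (Fin n)) :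
    inner ℝ y (Matrix.toEuclideanCLM (n := Fin n) (𝕜 := ℝ) P w)
      = inner ℝ w (Matrix.toEuclideanCLM (n := Fin n) (𝕜 := ℝ) P y) := by
  rw [← aux_dot, ← aux_dot]
  have hT : Pᵀ = P := by simpa using hP.eq
  rw [Matrix.dotProduct_mulVec, ← Matrix.mulVec_transpose, hT, dotProduct_comm]

/-- Exponential stability of the first-order (variational) system: if the
nominal flow is globally exponentially stable and `P` is a Lyapunov matrix for the
linearization at the origin, then the solution of the variational system along any
trajectory satisfies an explicit exponentially decaying bound. -/
theorem variational_system_exponentially_stable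
    (n : ℕ)
    (D : Set (EuclideanSpace ℝ (Fin n)))
    (hDcompact : IsCompact D)
    (hDsub : ∀ x ∈ D, ∀ i, x i ∈ Set.Icc (0 : ℝ) 1)
    (f : EuclideanSpace ℝ (Fin n) → EuclideanSpace ℝ (Fin n))
    (hf0 : f 0 = 0)
    (hfd : Differentiable ℝ f)
    (L : ℝ) (hL : 0 < L)
    (hLip : ∀ x y : EuclideanSpace ℝ (Fin n),
      ‖fderiv ℝ f x - fderiv ℝ f y‖ ≤ L * ‖x - y‖)
    (φ : ℝ → EuclideanSpace ℝ (Fin n) → EuclideanSpace ℝ (Fin n))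
    (hφ0 : ∀ x ∈ D, φ 0 x = x)
    (hφD : ∀ x ∈ D, ∀ t : ℝ, 0 ≤ t → φ t x ∈ D)
    (hφderiv : ∀ x ∈ D, ∀ t : ℝ, 0 ≤ t →
      HasDerivAt (fun s => φ s x) (f (φ t x)) t)
    -- global exponential stability with equilibrium 0
    (κ : ℝ) (hκ : 0 < κ) (a : ℝ) (ha : 0 < a)
    (hGES : ∀ x ∈ D, ∀ t : ℝ, 0 ≤ t → ‖φ t x‖ ≤ κ * ‖x‖ * Real.exp (-a * t))
    -- the Lyapunov matrix `P`
    (P : Matrix (Fin n) (Fin n) ℝ)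
    (hP : P.IsHermitian) (hPpos : P.PosDef)
    (hPLyap : ∀ y : EuclideanSpace ℝ (Fin n),
      2 * ((y : Fin n → ℝ) ⬝ᵥ P.mulVec (fderiv ℝ f 0 y : Fin n → ℝ)) ≤ -‖y‖ ^ 2)
    (lmin lmax : ℝ)
    (hlmin : IsLeast (Set.range hP.eigenvalues) lmin)
    (hlmax : IsGreatest (Set.range hP.eigenvalues) lmax)
    -- the data of the variational system
    (x : EuclideanSpace ℝ (Fin n)) (hx : x ∈ D)
    (z : EuclideanSpace ℝ (Fin n))
    (x1 : ℝ → EuclideanSpace ℝ (Fin n))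
    (hx10 : x1 0 = z)
    (hx1deriv : ∀ t : ℝ, 0 ≤ t →
      HasDerivAt x1 (fderiv ℝ f (φ t x) (x1 t)) t) :
    ∀ t : ℝ, 0 ≤ t →
      ‖x1 t‖ ^ 2 ≤
        (((z : Fin n → ℝ) ⬝ᵥ P.mulVec (z : Fin n → ℝ)) / lmin) *
          Real.exp (2 * lmax * L * κ * ‖x‖ / (a * lmin)) *
          Real.exp (-t / lmax) := by
  have hlminpos : 0 < lmin := by
    obtain ⟨i, hi⟩ := hlmin.1
    rw [← hi]; exact hPpos.eigenvalues_pos i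
  have hlmm : lmin ≤ lmax := hlmax.2 hlmin.1
  have hlmaxpos : 0 < lmax := lt_of_lt_of_le hlminpos hlmm
  set T := Matrix.toEuclideanCLM (n := Fin n) (𝕜 := ℝ) P with hTdef
  have hle : ∀ i, hP.eigenvalues i ≤ lmax := fun i => hlmax.2 ⟨i, rfl⟩
  have hge : ∀ i, lmin ≤ hP.eigenvalues i := fun i => hlmin.2 ⟨i, rfl⟩
  have hlow : ∀ y, lmin * ‖y‖ ^ 2 ≤ inner ℝ y (T y) := by
    intro y
    rw [hTdef, aux_quad hP, aux_norm hP, Finset.mul_sum]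
    exact Finset.sum_le_sum fun i _ => mul_le_mul_of_nonneg_right (hge i) (sq_nonneg _)
  have hup : ∀ y, inner ℝ y (T y) ≤ lmax * ‖y‖ ^ 2 := by
    intro y
    rw [hTdef, aux_quad hP, aux_norm hP, Finset.mul_sum]
    exact Finset.sum_le_sum fun i _ => mul_le_mul_of_nonneg_right (hle i) (sq_nonneg _)
  have hTn : ∀ y, ‖T y‖ ≤ lmax * ‖y‖ := by
    intro y
    refine abs_le_of_sq_le_sq' ?_ (by positivity) |>.2
    rw [mul_pow, aux_norm hP (T y), aux_norm hP y, Finset.mul_sum]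
    refine Finset.sum_le_sum fun i _ => ?_
    rw [hTdef, aux_eig, mul_pow]
    have := hle i
    have h0 : 0 ≤ hP.eigenvalues i := hlminpos.le.trans (hge i)
    gcongr
  have hLy : ∀ y, 2 * inner ℝ y (T (fderiv ℝ f 0 y)) ≤ -‖y‖ ^ 2 := by
    intro y
    rw [hTdef, ← aux_dot]; exact hPLyap y
  set V : ℝ → ℝ := fun t => inner ℝ (x1 t) (T (x1 t)) with hV
  have hVd : ∀ t, 0 ≤ t →
      HasDerivAt V (2 * inner ℝ (x1 t) (T (fderiv ℝ f (φ t x) (x1 t)))) t := by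
    intro t ht
    have h1 := hx1deriv t ht
    have h2 : HasDerivAt (fun s => T (x1 s)) (T (fderiv ℝ f (φ t x) (x1 t))) t :=
      T.hasFDerivAt.comp_hasDerivAt t h1
    have h3 := h1.inner ℝ h2
    have h4 := aux_symm hP (fderiv ℝ f (φ t x) (x1 t)) (x1 t)
    rw [← hTdef] at h4
    rw [h4, ← two_mul] at h3
    exact h3
  set C := 2 * lmax * L * κ * ‖x‖ / lmin with hC
  have hC0 : 0 ≤ C := by positivity
  have hVb : ∀ t, 0 ≤ t → 2 * inner ℝ (x1 t) (T (fderiv ℝ f (φ t x) (x1 t)))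
      ≤ (-1 / lmax + C * Real.exp (-a * t)) * V t := by
    intro t ht
    set y := x1 t
    set e := Real.exp (-a * t)
    have he : 0 < e := Real.exp_pos _
    have hdecomp : fderiv ℝ f (φ t x) y
        = fderiv ℝ f 0 y + (fderiv ℝ f (φ t x) - fderiv ℝ f 0) y := by simp
    have h1 : ‖(fderiv ℝ f (φ t x) - fderiv ℝ f 0) y‖ ≤ L * (κ * ‖x‖ * e) * ‖y‖ := by
      refine (ContinuousLinearMap.le_opNorm _ _).trans ?_
      have h := hLip (φ t x) 0
      rw [sub_zero] at h
      have h' := hGES x hx t ht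
      have : L * ‖φ t x‖ ≤ L * (κ * ‖x‖ * e) := by gcongr
      gcongr
      exact h.trans this
    have h2 : inner ℝ y (T ((fderiv ℝ f (φ t x) - fderiv ℝ f 0) y))
        ≤ ‖y‖ * (lmax * (L * (κ * ‖x‖ * e) * ‖y‖)) := by
      refine (real_inner_le_norm _ _).trans ?_
      gcongr
      refine (hTn _).trans ?_
      gcongr
    have h3 : V t / lmax ≤ ‖y‖ ^ 2 := by
      rw [div_le_iff₀ hlmaxpos, mul_comm]; exact hup y
    have h4 : ‖y‖ ^ 2 ≤ V t / lmin := by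
      rw [le_div_iff₀ hlminpos, mul_comm]; exact hlow y
    have h5 : (2 * lmax * L * κ * ‖x‖ * e) * ‖y‖ ^ 2
        ≤ (2 * lmax * L * κ * ‖x‖ * e) * (V t / lmin) := by gcongr
    have h6 : (-1 / lmax + C * e) * V t
        = -(V t / lmax) + (2 * lmax * L * κ * ‖x‖ * e) * (V t / lmin) := by
      rw [hC]; ring
    rw [h6, hdecomp, map_add, inner_add_right]
    have h7 := hLy y
    nlinarith
  set g : ℝ → ℝ := fun t => V t * Real.exp (t / lmax + C / a * Real.exp (-a * t)) with hg
  have hgd : ∀ t, 0 ≤ t → HasDerivAt g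
      (2 * inner ℝ (x1 t) (T (fderiv ℝ f (φ t x) (x1 t)))
          * Real.exp (t / lmax + C / a * Real.exp (-a * t))
        + V t * (Real.exp (t / lmax + C / a * Real.exp (-a * t))
          * (1 / lmax + C / a * (Real.exp (-a * t) * (-a * 1))))) t := by
    intro t ht
    refine (hVd t ht).mul (HasDerivAt.exp (HasDerivAt.add ?_ (HasDerivAt.const_mul _ ?_)))
    · exact (hasDerivAt_id t).div_const lmax
    · exact ((hasDerivAt_id t).const_mul (-a)).exp
  have hanti : AntitoneOn g (Set.Ici 0) := by
    refine antitoneOn_of_deriv_nonpos (convex_Ici 0)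
      (fun t ht => (hgd t ht).continuousAt.continuousWithinAt)
      (fun t ht => ?_) (fun t ht => ?_)
    · rw [interior_Ici] at ht
      exact (hgd t (le_of_lt ht)).differentiableAt.differentiableWithinAt
    · rw [interior_Ici] at ht
      have ht' : 0 ≤ t := le_of_lt ht
      rw [(hgd t ht').deriv]
      have h1 := hVb t ht'
      have hE : 0 < Real.exp (t / lmax + C / a * Real.exp (-a * t)) := Real.exp_pos _
      have h2 : C / a * (Real.exp (-a * t) * (-a * 1)) = -(C * Real.exp (-a * t)) := by
        field_simp
      rw [h2]
      have h3 := mul_le_mul_of_nonneg_right h1 hE.le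
      have h4 : (-1 / lmax + C * Real.exp (-a * t)) = -(1 / lmax + -(C * Real.exp (-a * t))) := by
        ring
      rw [h4] at h3
      linarith
  intro t ht
  have hgt : g t ≤ g 0 := hanti (Set.mem_Ici.2 le_rfl) (Set.mem_Ici.2 ht) ht
  have hg0 : g 0 = V 0 * Real.exp (C / a) := by simp [hg]
  have hVt0 : 0 ≤ V t := le_trans (by positivity) (hlow (x1 t))
  have hlow' : V t * Real.exp (t / lmax) ≤ g t := by
    simp only [hg]
    gcongr
    have : 0 ≤ C / a * Real.exp (-a * t) := by positivity
    linarith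
  have hz : (z : Fin n → ℝ) ⬝ᵥ P.mulVec (z : Fin n → ℝ) = V 0 := by
    rw [aux_dot, ← hx10]
  have hexp : 2 * lmax * L * κ * ‖x‖ / (a * lmin) = C / a := by
    rw [hC]; field_simp
  rw [hz, hexp]
  have hfin : V t ≤ V 0 * Real.exp (C / a) * Real.exp (-t / lmax) := by
    have h1 : V t * Real.exp (t / lmax) ≤ V 0 * Real.exp (C / a) := by linarith
    have h2 : Real.exp (t / lmax) * Real.exp (-t / lmax) = 1 := by
      rw [← Real.exp_add, ← Real.exp_zero]; congr 1; ring
    have h3 := mul_le_mul_of_nonneg_right h1 (Real.exp_pos (-t / lmax)).le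
    rwa [mul_assoc, h2, mul_one] at h3
  have hl := hlow (x1 t)
  have : V 0 / lmin * Real.exp (C / a) * Real.exp (-t / lmax)
      = V 0 * Real.exp (C / a) * Real.exp (-t / lmax) / lmin := by ring
  rw [this, le_div_iff₀ hlminpos, mul_comm]
  exact hl.trans hfin
end
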